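/- arXiv:2408.04148 — 2 statements merged into one kernel-verified Lean document; each statement's English description precedes it below -/
import Mathlib

section
/- Let p > 0. If p < 1, then there exist a Borel probability measure μ on ℝ with μ(ℝ \ 𝕃) = 0 and constants C > 0, M > 1 such that |μ̂(ξ)| ≤ C·exp(−(log|ξ|)^p) for all |ξ| ≥ M. If p ≥ 1, then no Borel probability measure μ on ℝ with μ(ℝ \ 𝕃) = 0 satisfies |μ̂(ξ)| ≤ C·exp(−(log|ξ|)^p) for all |ξ| ≥ M, for any constants C > 0, M > 1. -/
open MeasureTheory Filter Set

/-- The Fourier transform of a measure on `ℝ`: `μ̂(ξ) = ∫ e^(−2πiξx) dμ(x)`. -/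
noncomputable def fourierT (μ : Measure ℝ) (ξ : ℝ) : ℂ :=
  ∫ x, Complex.exp (((-2 * Real.pi * ξ * x : ℝ) : ℂ) * Complex.I) ∂μ

/-!
Testing `μ` against Gaussians turns a bound `|μ̂(ξ)| ≤ C |ξ|⁻ˢ` with `0 < s < 1` into the Frostman
bound `μ(B(a, r)) ≲ rˢ`, and then Borel–Cantelli over the balls `B(a / b, b⁻ⁿ)` with `n ≥ 3 / s`
shows that `μ` does not charge the Liouville numbers. For `1 ≤ p` the rate `exp(-(log |ξ|)ᵖ)` is
eventually below `|ξ|⁻¹`.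

For `p < 1` the rate `W(ξ) = exp(-(log (1 + |ξ|))ᵖ)` is slower than every power and `1 / W` is
submultiplicative. Average over the primes `q ≤ X` the `1/q`-periodic bumps concentrated near the
fractions with denominator `q`. The `m`-th Fourier coefficient of this average involves only the
primes dividing `m`, hence is at most `log₂ |m| / π(X)`, while smoothness of the bumps makes it
negligible once `|m|` exceeds a fixed power of `X`; so for large `X` all coefficients with `m ≠ 0`
are below `ε W(m)`. Multiplying a smooth density by such a function changes its Fourier transform by
`O(ε W)`. Iterating with summable errors and ever finer approximation yields densities with Fourier
transforms uniformly `O(W)`, and any weak limit lives on the intersection of their supports, which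
consists of Liouville numbers.
-/

open Bornology Metric
open scoped Asymptotics ContDiff FourierTransform Pointwise Real Topology

/-! ### Frostman bounds from Fourier decay -/

theorem fourierT_eq_fourierIntegral (μ : Measure ℝ) :
    fourierT μ = VectorFourier.fourierIntegral Real.fourierChar μ (innerₗ ℝ) 1 := by
  ext ξ
  simp only [fourierT, VectorFourier.fourierIntegral, Circle.smul_def, Real.fourierChar_apply,
    innerₗ_apply_apply, Real.inner_apply, Pi.one_apply, smul_eq_mul, mul_one]
  refine integral_congr_ae (ae_of_all _ fun x => ?_)
  push_cast
  ring_nf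

theorem norm_fourierT_le (μ : Measure ℝ) (ξ : ℝ) : ‖fourierT μ ξ‖ ≤ μ.real univ := by
  rw [fourierT_eq_fourierIntegral]
  exact (VectorFourier.norm_fourierIntegral_le_integral_norm _ _ _ _ _).trans_eq (by simp)

theorem integral_fourier_eq_integral_fourierT_mul (μ : Measure ℝ) [IsFiniteMeasure μ] {g : ℝ → ℂ}
    (hg : Integrable g) : ∫ x, 𝓕 g x ∂μ = ∫ ξ, fourierT μ ξ * g ξ := by
  have flip := VectorFourier.integral_fourierIntegral_smul_eq_flip (L := innerₗ ℝ)
    Real.continuous_fourierChar continuous_inner (integrable_const (μ := μ) (1 : ℂ)) hg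
  rw [flip_innerₗ] at flip
  simpa [fourierT_eq_fourierIntegral, Real.fourier_eq, VectorFourier.fourierIntegral, Pi.one_def]
    using flip.symm

theorem integrable_exp_neg_pi_mul_sq_mul_abs_rpow {s : ℝ} (hs : -1 < s) :
    Integrable fun t : ℝ => Real.exp (-π * t ^ 2) * |t| ^ s := by
  have right : IntegrableOn (fun t : ℝ => Real.exp (-π * t ^ 2) * |t| ^ s) (Ioi 0) :=
    (integrableOn_rpow_mul_exp_neg_mul_sq Real.pi_pos hs).congr_fun
      (fun t ht => by simp only [abs_of_pos (mem_Ioi.1 ht), mul_comm]) measurableSet_Ioi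
  have left : IntegrableOn (fun t : ℝ => Real.exp (-π * t ^ 2) * |t| ^ s) (Iio 0) := by
    simpa using right.comp_neg
  rw [← integrableOn_univ, ← Iic_union_Ioi (a := (0 : ℝ))]
  exact .union (by rwa [integrableOn_Iic_iff_integrableOn_Iio]) right

theorem exists_fourier_eq_gaussian (a : ℝ) {r : ℝ} (hr : 0 < r) :
    ∃ g : ℝ → ℂ, Integrable g ∧ (∀ ξ, ‖g ξ‖ = r * Real.exp (-π * (r * ξ) ^ 2)) ∧
      ∀ x : ℝ, 𝓕 g x = (Real.exp (-π * ((x - a) / r) ^ 2) : ℝ) := by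
  let modulated : ℝ → ℂ := fun ξ =>
    Complex.exp (-π * ((r : ℂ) ^ 2) * ξ ^ 2 + 2 * π * (Complex.I * a) * ξ)
  have norm_modulated (ξ : ℝ) : ‖modulated ξ‖ = Real.exp (-π * (r * ξ) ^ 2) := by
    rw [Complex.norm_exp]
    congr 1
    simp [← Complex.ofReal_pow, mul_pow, mul_assoc]
  refine ⟨fun ξ => r * modulated ξ, ?_, fun ξ => ?_, fun x => ?_⟩
  · have gaussian_integrable : Integrable fun ξ : ℝ => Real.exp (-π * (r * ξ) ^ 2) :=
      (integrable_exp_neg_mul_sq Real.pi_pos).comp_mul_left' hr.ne'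
    refine (gaussian_integrable.mono' ?_ (ae_of_all _ fun ξ => (norm_modulated ξ).le)).const_mul _
    fun_prop
  · rw [norm_mul, norm_modulated, Complex.norm_of_nonneg hr.le]
  · have re_sq_pos : 0 < ((r : ℂ) ^ 2).re := by
      rw [← Complex.ofReal_pow, Complex.ofReal_re]; positivity
    have sqrt_sq : ((r : ℂ) ^ 2) ^ (1 / 2 : ℂ) = r := by
      rw [one_div, Complex.sq_cpow_two_inv (by simpa using hr)]
    have r_ne_zero : (r : ℂ) ≠ 0 := by exact_mod_cast hr.ne'
    have fourier_modulated := congrFun (fourier_gaussian_pi' re_sq_pos (Complex.I * a)) x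
    rw [sqrt_sq, ← mul_assoc Complex.I, Complex.I_mul_I] at fourier_modulated
    have : 𝓕 (fun ξ => r * modulated ξ) x = r * 𝓕 modulated x := by
      simp only [Real.fourier_eq, Circle.smul_def, smul_eq_mul, mul_left_comm _ (r : ℂ),
        integral_const_mul]
    rw [this, fourier_modulated]
    push_cast
    field_simp
    ring_nf

theorem exp_neg_pi_mul_measureReal_closedBall_le (μ : Measure ℝ) [IsFiniteMeasure μ] (a : ℝ)
    {r : ℝ} (hr : 0 < r) :
    Real.exp (-π) * μ.real (closedBall a r) ≤ ∫ x, Real.exp (-π * ((x - a) / r) ^ 2) ∂μ := by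
  have gaussian_integrable : Integrable (fun x => Real.exp (-π * ((x - a) / r) ^ 2)) μ := by
    refine .of_bound (by fun_prop) 1 (ae_of_all _ fun x => ?_)
    rw [Real.norm_of_nonneg (Real.exp_pos _).le, Real.exp_le_one_iff]
    nlinarith [Real.pi_pos, sq_nonneg ((x - a) / r)]
  have ball_subset :
      closedBall a r ⊆ {x | Real.exp (-π) ≤ Real.exp (-π * ((x - a) / r) ^ 2)} := by
    intro x hx
    have : ((x - a) / r) ^ 2 ≤ 1 := by
      rw [sq_le_one_iff_abs_le_one, abs_div, abs_of_pos hr]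
      exact (div_le_one hr).2 hx
    rw [mem_ofPred_eq, Real.exp_le_exp]
    nlinarith [Real.pi_pos]
  calc Real.exp (-π) * μ.real (closedBall a r)
      ≤ Real.exp (-π) * μ.real {x | Real.exp (-π) ≤ Real.exp (-π * ((x - a) / r) ^ 2)} := by
        gcongr
        exact measure_ne_top _ _
    _ ≤ ∫ x, Real.exp (-π * ((x - a) / r) ^ 2) ∂μ :=
        mul_meas_ge_le_integral_of_nonneg (ae_of_all _ fun x => (Real.exp_pos _).le)
          gaussian_integrable _

section Frostman

variable {μ : Measure ℝ} [IsFiniteMeasure μ] {s C : ℝ}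

theorem integral_gaussian_le_of_norm_fourierT_le (hs : s < 1)
    (hμ : ∀ ξ ≠ 0, ‖fourierT μ ξ‖ ≤ C * |ξ| ^ (-s)) (a : ℝ) {r : ℝ} (hr : 0 < r) :
    ∫ x, Real.exp (-π * ((x - a) / r) ^ 2) ∂μ ≤
      C * (∫ t : ℝ, Real.exp (-π * t ^ 2) * |t| ^ (-s)) * r ^ s := by
  obtain ⟨g, hg, norm_g, fourier_g⟩ := exists_fourier_eq_gaussian a hr
  let kernel : ℝ → ℝ := fun t => Real.exp (-π * t ^ 2) * |t| ^ (-s)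
  have kernel_integrable : Integrable kernel :=
    integrable_exp_neg_pi_mul_sq_mul_abs_rpow (by linarith)
  have norm_le : ∀ᵐ ξ : ℝ, ‖fourierT μ ξ * g ξ‖ ≤ C * r ^ s * (r * kernel (r * ξ)) := by
    filter_upwards [compl_mem_ae_iff.2 (measure_singleton (0 : ℝ))] with ξ hξ
    calc ‖fourierT μ ξ * g ξ‖
        ≤ C * |ξ| ^ (-s) * (r * Real.exp (-π * (r * ξ) ^ 2)) := by
          rw [norm_mul, norm_g]
          gcongr
          exact hμ ξ hξ
      _ = C * r ^ s * (r * kernel (r * ξ)) := by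
          simp only [kernel, abs_mul, abs_of_pos hr, Real.mul_rpow hr.le (abs_nonneg ξ),
            Real.rpow_neg hr.le]
          field_simp
  calc ∫ x, Real.exp (-π * ((x - a) / r) ^ 2) ∂μ
      ≤ ‖((∫ x, Real.exp (-π * ((x - a) / r) ^ 2) ∂μ : ℝ) : ℂ)‖ := by
        rw [Complex.norm_real]; exact Real.le_norm_self _
    _ = ‖∫ ξ, fourierT μ ξ * g ξ‖ := by
        rw [← integral_fourier_eq_integral_fourierT_mul μ hg, ← integral_complex_ofReal]
        simp only [fourier_g]
    _ ≤ ∫ ξ, C * r ^ s * (r * kernel (r * ξ)) :=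
        norm_integral_le_of_norm_le
          (((kernel_integrable.comp_mul_left' hr.ne').const_mul r).const_mul _) norm_le
    _ = C * (∫ t, kernel t) * r ^ s := by
        rw [integral_const_mul, integral_const_mul, Measure.integral_comp_mul_left,
          smul_eq_mul, abs_of_pos (inv_pos.2 hr)]
        field_simp

theorem measureReal_closedBall_le_of_norm_fourierT_le (hs : s < 1)
    (hμ : ∀ ξ ≠ 0, ‖fourierT μ ξ‖ ≤ C * |ξ| ^ (-s)) (a : ℝ) {r : ℝ} (hr : 0 < r) :
    μ.real (closedBall a r) ≤
      Real.exp π * (C * ∫ t : ℝ, Real.exp (-π * t ^ 2) * |t| ^ (-s)) * r ^ s := by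
  have h := (exp_neg_pi_mul_measureReal_closedBall_le μ a hr).trans
    (integral_gaussian_le_of_norm_fourierT_le hs hμ a hr)
  rw [Real.exp_neg, inv_mul_le_iff₀ (Real.exp_pos _)] at h
  rwa [mul_assoc]

end Frostman

theorem exists_norm_fourierT_le_of_isBigO {μ : Measure ℝ} [IsFiniteMeasure μ] {s : ℝ} (hs : 0 ≤ s)
    (hμ : fourierT μ =O[cobounded ℝ] fun ξ => |ξ| ^ (-s)) :
    ∃ C, ∀ ξ ≠ 0, ‖fourierT μ ξ‖ ≤ C * |ξ| ^ (-s) := by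
  obtain ⟨C, hC⟩ := hμ.bound
  obtain ⟨R, -, hR⟩ := hasBasis_cobounded_norm.eventually_iff.1 hC
  refine ⟨max C (μ.real univ * |R| ^ s), fun ξ hξ => ?_⟩
  have hξ_pos : 0 < |ξ| := abs_pos.2 hξ
  rcases le_total R |ξ| with large | small
  · calc ‖fourierT μ ξ‖ ≤ C * ‖|ξ| ^ (-s)‖ := hR large
      _ = C * |ξ| ^ (-s) := by rw [Real.norm_of_nonneg (by positivity)]
      _ ≤ _ := by gcongr; exact le_max_left _ _
  · calc ‖fourierT μ ξ‖ ≤ μ.real univ := norm_fourierT_le μ ξ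
      _ = μ.real univ * |ξ| ^ s * |ξ| ^ (-s) := by
          rw [mul_assoc, ← Real.rpow_add hξ_pos, add_neg_cancel, Real.rpow_zero, mul_one]
      _ ≤ μ.real univ * |R| ^ s * |ξ| ^ (-s) := by
          have : |ξ| ^ s ≤ |R| ^ s :=
            Real.rpow_le_rpow hξ_pos.le (small.trans (le_abs_self R)) hs
          gcongr
      _ ≤ _ := by gcongr; exact le_max_right _ _

/-! ### Measures not charging the Liouville numbers -/

section LiouvilleNull

variable {μ : Measure ℝ} {s K : ℝ}

theorem measure_near_rational_le
    (hμ : ∀ a r : ℝ, 0 < r → μ (closedBall a r) ≤ ENNReal.ofReal (K * r ^ s)) (N n : ℕ) {b : ℕ}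
    (hb : 0 < b) :
    μ {x : ℝ | |x| ≤ N ∧ ∃ a : ℤ, |x - a / b| < 1 / (b : ℝ) ^ n} ≤
      ENNReal.ofReal ((2 * ((N + 1) * b) + 1) * (K * (1 / (b : ℝ) ^ n) ^ s)) := by
  have hb_pos : (0 : ℝ) < b := by exact_mod_cast hb
  let numerators : Finset ℤ := Finset.Icc (-((N + 1) * b : ℕ)) ((N + 1) * b : ℕ)
  have cover : {x : ℝ | |x| ≤ N ∧ ∃ a : ℤ, |x - a / b| < 1 / (b : ℝ) ^ n} ⊆
      ⋃ a ∈ numerators, closedBall ((a : ℝ) / b) (1 / (b : ℝ) ^ n) := by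
    rintro x ⟨hx, a, ha⟩
    refine mem_iUnion₂.2 ⟨a, ?_, ha.le⟩
    have radius_le_one : 1 / (b : ℝ) ^ n ≤ 1 :=
      (div_le_one (by positivity)).2 (one_le_pow₀ (by exact_mod_cast hb))
    have : |(a : ℝ) / b| ≤ N + 1 := by
      linarith [abs_sub_abs_le_abs_sub ((a : ℝ) / b) x, abs_sub_comm ((a : ℝ) / b) x]
    rw [abs_div, abs_of_pos hb_pos, div_le_iff₀ hb_pos] at this
    exact Finset.mem_Icc.2 (abs_le.1 (by exact_mod_cast this))
  have card_numerators : (numerators.card : ℝ) = 2 * ((N + 1) * b) + 1 := by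
    have : numerators.card = 2 * ((N + 1) * b) + 1 := by
      rw [Int.card_Icc]
      omega
    rw [this]
    push_cast
    ring
  calc _ ≤ ∑ a ∈ numerators, μ (closedBall ((a : ℝ) / b) (1 / (b : ℝ) ^ n)) :=
        (measure_mono cover).trans (measure_biUnion_finset_le _ _)
    _ ≤ ∑ _a ∈ numerators, ENNReal.ofReal (K * (1 / (b : ℝ) ^ n) ^ s) :=
        Finset.sum_le_sum fun a _ => hμ _ _ (by positivity)
    _ = _ := by
        rw [Finset.sum_const, nsmul_eq_mul, ← card_numerators,
          ENNReal.ofReal_mul (Nat.cast_nonneg _), ENNReal.ofReal_natCast]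

theorem measure_liouville_eq_zero_of_closedBall_le (hs : 0 < s)
    (hμ : ∀ a r : ℝ, 0 < r → μ (closedBall a r) ≤ ENNReal.ofReal (K * r ^ s)) :
    μ {x | Liouville x} = 0 := by
  obtain ⟨n, hn⟩ := exists_nat_ge (3 / s)
  rw [div_le_iff₀ hs] at hn
  have card_mul_rpow_le (N : ℕ) {b : ℕ} (hb : 0 < b) :
      (2 * ((N + 1) * b) + 1) * (K * (1 / (b : ℝ) ^ n) ^ s) ≤
        (2 * N + 3) * |K| * (1 / (b : ℝ) ^ 2) := by
    have one_le_b : (1 : ℝ) ≤ b := by exact_mod_cast hb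
    have radius_rpow : (1 / (b : ℝ) ^ n) ^ s ≤ 1 / (b : ℝ) ^ 3 := by
      rw [Real.div_rpow zero_le_one (by positivity), Real.one_rpow, ← Real.rpow_natCast b n,
        ← Real.rpow_mul (by positivity)]
      gcongr
      exact_mod_cast Real.rpow_le_rpow_of_exponent_le one_le_b hn
    calc _ ≤ (2 * ((N + 1) * b) + 1) * (|K| * (1 / (b : ℝ) ^ n) ^ s) := by
          gcongr
          exact le_abs_self K
      _ ≤ ((2 * N + 3) * b) * (|K| * (1 / (b : ℝ) ^ 3)) := by
          gcongr
          linarith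
      _ = _ := by field_simp
  have bounded_part_null (N : ℕ) : μ {x | ∃ᶠ b : ℕ in atTop, |x| ≤ N ∧
      ∃ a : ℤ, |x - a / b| < 1 / (b : ℝ) ^ n} = 0 := by
    have summable_bound : Summable fun b : ℕ => (2 * N + 3) * |K| * (1 / (b : ℝ) ^ 2) :=
      (Real.summable_one_div_nat_pow.2 one_lt_two).mul_left _
    refine measure_setOfPred_frequently_eq_zero
      (ne_top_of_le_ne_top summable_bound.tsum_ofReal_ne_top (ENNReal.tsum_le_tsum fun b => ?_))
    rcases b.eq_zero_or_pos with rfl | hb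
    · have : n ≠ 0 := by rintro rfl; norm_num at hn
      simp [this, (abs_nonneg _).not_gt]
    · exact (measure_near_rational_le hμ N n hb).trans
        (ENNReal.ofReal_le_ofReal (card_mul_rpow_le N hb))
  refine measure_mono_null (fun x hx => ?_) (measure_iUnion_null bounded_part_null)
  obtain ⟨N, hN⟩ := exists_nat_ge |x|
  exact mem_iUnion.2 ⟨N, (hx.frequently_exists_num n).mono fun b ⟨a, _, ha⟩ => ⟨hN, a, ha⟩⟩

end LiouvilleNull

theorem measure_liouville_eq_zero_of_fourierT_isBigO {μ : Measure ℝ} [IsFiniteMeasure μ] {s : ℝ}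
    (hs : 0 < s) (hμ : fourierT μ =O[cobounded ℝ] fun ξ => |ξ| ^ (-s)) :
    μ {x | Liouville x} = 0 := by
  have hs' : 0 < min s (1 / 2) := lt_min hs (by norm_num)
  have rpow_isBigO :
      (fun ξ : ℝ => |ξ| ^ (-s)) =O[cobounded ℝ] fun ξ => |ξ| ^ (-min s (1 / 2)) := by
    refine .of_bound 1 (hasBasis_cobounded_norm.eventually_iff.2 ⟨1, trivial, fun ξ hξ => ?_⟩)
    rw [Real.norm_of_nonneg (by positivity), Real.norm_of_nonneg (by positivity), one_mul]
    exact Real.rpow_le_rpow_of_exponent_le hξ (neg_le_neg (min_le_left _ _))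
  obtain ⟨C, hC⟩ := exists_norm_fourierT_le_of_isBigO hs'.le (hμ.trans rpow_isBigO)
  have ball_le (a : ℝ) {r : ℝ} (hr : 0 < r) := measureReal_closedBall_le_of_norm_fourierT_le
    ((min_le_right _ _).trans_lt one_half_lt_one) hC a hr
  exact measure_liouville_eq_zero_of_closedBall_le hs' fun a r hr =>
    (ofReal_measureReal (measure_ne_top _ _)).symm.trans_le
      (ENNReal.ofReal_le_ofReal (ball_le a hr))

/-! ### Subpolynomial weights -/

/-- A decay rate `W` for Fourier transforms whose reciprocal is a Beurling weight (even,
increasing on the half-line and submultiplicative) growing more slowly than every power. -/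
structure IsSubpolynomialWeight (W : ℝ → ℝ) : Prop where
  pos : ∀ t, 0 < W t
  le_of_abs_le : ∀ {s t}, |s| ≤ |t| → W t ≤ W s
  mul_le_add : ∀ s t, W s * W t ≤ W (s + t)
  rpow_neg_isBigO : ∀ {s : ℝ}, 0 < s → (fun t => t ^ (-s)) =O[atTop] W

namespace IsSubpolynomialWeight

variable {W : ℝ → ℝ} (hW : IsSubpolynomialWeight W)
include hW

theorem log_mul_rpow_neg_isLittleO {s : ℝ} (hs : 0 < s) :
    (fun t => Real.log t * t ^ (-s)) =o[atTop] W := by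
  have h := (isLittleO_log_rpow_atTop (half_pos hs)).mul_isBigO
    (Asymptotics.isBigO_refl (fun t : ℝ => t ^ (-s)) atTop)
  refine (h.congr' .rfl ?_).trans_isBigO (hW.rpow_neg_isBigO (half_pos hs))
  filter_upwards [eventually_gt_atTop 0] with t ht
  rw [← Real.rpow_add ht]
  ring_nf

theorem inv_isLittleO : (fun t : ℝ => t⁻¹) =o[atTop] W := by
  refine Asymptotics.IsBigO.trans_isLittleO (.of_bound 1 ?_)
    (hW.log_mul_rpow_neg_isLittleO one_pos)
  filter_upwards [eventually_ge_atTop (Real.exp 1)] with t ht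
  have one_le_log : 1 ≤ Real.log t := (Real.le_log_iff_exp_le ((Real.exp_pos 1).trans_le ht)).2 ht
  rw [Real.rpow_neg_one, norm_mul, Real.norm_of_nonneg (zero_le_one.trans one_le_log), one_mul]
  exact le_mul_of_one_le_left (norm_nonneg _) one_le_log

theorem exists_inv_one_add_abs_le : ∃ C > 0, ∀ t, (1 + |t|)⁻¹ ≤ C * W t := by
  obtain ⟨T, hT⟩ := eventually_atTop.1
    ((hW.inv_isLittleO.bound one_pos).and (eventually_gt_atTop 0))
  have WT_pos := hW.pos T
  refine ⟨1 + (W T)⁻¹, by positivity, fun t => ?_⟩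
  rw [add_mul, one_mul]
  rcases le_total T |t| with large | small
  · have t_pos := (hT |t| large).2
    have W_abs : W |t| ≤ W t := hW.le_of_abs_le (abs_abs t).ge
    have h := (hT |t| large).1
    rw [norm_inv, Real.norm_of_nonneg t_pos.le, Real.norm_of_nonneg (hW.pos _).le, one_mul] at h
    calc (1 + |t|)⁻¹ ≤ |t|⁻¹ := by gcongr; linarith
      _ ≤ W t := h.trans W_abs
      _ ≤ W t + (W T)⁻¹ * W t := le_add_of_nonneg_right (mul_nonneg (by positivity) (hW.pos t).le)
  · have WT_le : W T ≤ W t := hW.le_of_abs_le (small.trans (le_abs_self T))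
    calc (1 + |t|)⁻¹ ≤ 1 := inv_le_one_of_one_le₀ (by simp)
      _ ≤ (W T)⁻¹ * W t := by rwa [← div_eq_inv_mul, one_le_div WT_pos]
      _ ≤ W t + (W T)⁻¹ * W t := le_add_of_nonneg_left (hW.pos t).le

theorem exists_le_mul_one_add_abs_sub :
    ∃ C > 0, ∀ m ξ, W m ≤ C * W ξ * (1 + |ξ - m|) := by
  obtain ⟨C, C_pos, hC⟩ := hW.exists_inv_one_add_abs_le
  refine ⟨C, C_pos, fun m ξ => ?_⟩
  have h := hC (ξ - m)
  rw [inv_le_iff_one_le_mul₀ (by positivity)] at h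
  calc W m ≤ W m * (C * W (ξ - m) * (1 + |ξ - m|)) := le_mul_of_one_le_right (hW.pos m).le h
    _ = C * (W m * W (ξ - m)) * (1 + |ξ - m|) := by ring
    _ ≤ C * W ξ * (1 + |ξ - m|) := by
      gcongr
      simpa using hW.mul_le_add m (ξ - m)

end IsSubpolynomialWeight

theorem isSubpolynomialWeight_exp_neg_log_rpow {p : ℝ} (hp : 0 < p) (hp1 : p < 1) :
    IsSubpolynomialWeight fun t => Real.exp (-Real.log (1 + |t|) ^ p) := by
  have log_nonneg (t : ℝ) : 0 ≤ Real.log (1 + |t|) := Real.log_nonneg (by simp)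
  have log_add_le (s t : ℝ) :
      Real.log (1 + |s + t|) ≤ Real.log (1 + |s|) + Real.log (1 + |t|) := by
    rw [← Real.log_mul (by positivity) (by positivity)]
    gcongr
    nlinarith [abs_add_le s t, mul_nonneg (abs_nonneg s) (abs_nonneg t)]
  refine ⟨fun t => Real.exp_pos _, fun h => ?_, fun s t => ?_, fun {s} hs => ?_⟩
  · gcongr
    exact log_nonneg _
  · rw [← Real.exp_add, Real.exp_le_exp, ← neg_add, neg_le_neg_iff]
    exact (Real.rpow_le_rpow (log_nonneg _) (log_add_le s t) hp.le).trans
      (Real.rpow_add_le_add_rpow (log_nonneg s) (log_nonneg t) hp.le hp1.le)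
  · have rpow_le : ∀ᶠ t : ℝ in atTop, Real.log (1 + t) ^ p ≤ s / 2 * Real.log (1 + t) := by
      have log_tendsto : Tendsto (fun t : ℝ => Real.log (1 + t)) atTop atTop :=
        Real.tendsto_log_atTop.comp (tendsto_atTop_add_const_left _ 1 tendsto_id)
      refine log_tendsto.eventually (p := fun L => L ^ p ≤ s / 2 * L) ?_
      filter_upwards [(tendsto_rpow_neg_atTop (sub_pos.2 hp1)).eventually_le_const (half_pos hs),
        eventually_gt_atTop 0] with L hL L_pos
      calc L ^ p = L ^ (-(1 - p)) * L := by
            rw [← Real.rpow_add_one L_pos.ne']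
            ring_nf
        _ ≤ s / 2 * L := by gcongr
    refine .of_bound 1 ?_
    filter_upwards [rpow_le, eventually_ge_atTop 2] with t ht two_le
    have t_pos : 0 < t := by linarith
    rw [Real.norm_of_nonneg (by positivity), Real.norm_of_nonneg (Real.exp_pos _).le, one_mul,
      Real.rpow_def_of_pos t_pos, Real.exp_le_exp, abs_of_pos t_pos]
    have log_le : Real.log (1 + t) ≤ 2 * Real.log t := by
      rw [← Real.log_rpow t_pos, Real.rpow_two]
      gcongr
      nlinarith
    nlinarith

/-! ### Multiplication by nearly flat periodic functions -/

theorem exists_tsum_one_div_one_add_abs_sub_sq_le :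
    ∃ S > 0, ∀ ξ : ℝ, Summable (fun m : ℤ => 1 / (1 + |ξ - m|) ^ 2) ∧
      ∑' m : ℤ, 1 / (1 + |ξ - m|) ^ 2 ≤ S := by
  have summable_four : Summable fun m : ℤ => 4 / (1 + |(m : ℝ)|) ^ 2 := by
    refine .of_norm_bounded_eventually
      ((Real.summable_one_div_int_pow.2 one_lt_two).mul_left 4) ?_
    filter_upwards [(finite_singleton (0 : ℤ)).compl_mem_cofinite] with m hm
    have : 0 < |(m : ℝ)| := abs_pos.2 (by exact_mod_cast hm)
    rw [Real.norm_of_nonneg (by positivity), mul_one_div, ← sq_abs (m : ℝ)]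
    gcongr
    linarith
  refine ⟨∑' m : ℤ, 4 / (1 + |(m : ℝ)|) ^ 2,
    summable_four.tsum_pos (fun m => by positivity) 0 (by positivity), fun ξ => ?_⟩
  let shift : ℤ ≃ ℤ := Equiv.subLeft ⌊ξ⌋
  have term_le (m : ℤ) : 1 / (1 + |ξ - m|) ^ 2 ≤ 4 / (1 + |(shift m : ℝ)|) ^ 2 := by
    have : |(shift m : ℝ)| ≤ |ξ - m| + 1 := by
      have : (shift m : ℝ) = (ξ - m) - Int.fract ξ := by
        simp only [shift, Equiv.subLeft_apply, Int.cast_sub, Int.fract]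
        ring
      rw [this]
      refine (abs_sub _ _).trans ?_
      rw [abs_of_nonneg (Int.fract_nonneg ξ)]
      linarith [Int.fract_lt_one ξ]
    rw [div_le_div_iff₀ (by positivity) (by positivity)]
    nlinarith [abs_nonneg (shift m : ℝ), abs_nonneg (ξ - m)]
  have summable_shift : Summable fun m : ℤ => 4 / (1 + |(shift m : ℝ)|) ^ 2 :=
    summable_four.comp_injective shift.injective
  have summable_sub := Summable.of_nonneg_of_le (fun m => by positivity) term_le summable_shift
  exact ⟨summable_sub, (summable_sub.tsum_le_tsum term_le summable_shift).trans_eq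
    (shift.tsum_eq fun m : ℤ => 4 / (1 + |(m : ℝ)|) ^ 2)⟩

theorem exists_norm_fourier_le_div_one_add_abs_pow {g : ℝ → ℂ} (hg : ContDiff ℝ ∞ g)
    (hg' : HasCompactSupport g) (n : ℕ) : ∃ G > 0, ∀ ξ, ‖𝓕 g ξ‖ ≤ G / (1 + |ξ|) ^ n := by
  let φ := hg'.toSchwartzMap hg
  refine ⟨2 ^ n * (Finset.Iic (n, 0)).sup (fun m => SchwartzMap.seminorm ℝ m.1 m.2) (𝓕 φ) + 1,
    by positivity, fun ξ => ?_⟩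
  rw [le_div_iff₀ (by positivity), mul_comm]
  have := (𝓕 φ).one_add_le_sup_seminorm_apply (𝕜 := ℝ) (m := (n, 0)) le_rfl le_rfl ξ
  rw [norm_iteratedFDeriv_zero] at this
  exact this.trans (by simp)

theorem hasSum_fourier_mul {a : ℤ → ℂ} {f g : ℝ → ℂ} (hg : Integrable g)
    (hf : ∀ x, HasSum (fun m : ℤ => a m * 𝐞 (m * x)) (f x)) (ξ : ℝ) :
    HasSum (fun m : ℤ => a m * 𝓕 g (ξ - m)) (𝓕 (fun x => g x * f x) ξ) := by
  have summable_norm : Summable fun m => ‖a m‖ := by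
    simpa using (hf 0).summable.norm
  let term : ℤ → ℝ → ℂ := fun m x => a m * (𝐞 (-(x * (ξ - m))) • g x)
  have term_integrable (m : ℤ) : Integrable (term m) :=
    ((Real.fourierIntegral_convergent_iff' (.mul ℝ ℝ) (ξ - m)).2 hg).const_mul (a m)
  have summable_integral_norm : Summable fun m => ∫ x, ‖term m x‖ := by
    simp only [term, norm_mul, Circle.norm_smul, integral_const_mul]
    exact summable_norm.mul_right _
  have tsum_term (x : ℝ) : ∑' m, term m x = 𝐞 (-(x * ξ)) • (g x * f x) := by
    rw [← (hf x).tsum_eq, ← tsum_mul_left, Circle.smul_def, smul_eq_mul, ← tsum_mul_left]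
    congr 1 with m
    have : -(x * (ξ - m)) = -(x * ξ) + m * x := by ring
    simp only [term, this, AddChar.map_add_eq_mul, Circle.smul_def, smul_eq_mul, Circle.coe_mul]
    ring
  have key := hasSum_integral_of_summable_integral_norm term_integrable summable_integral_norm
  simp only [tsum_term, term, integral_const_mul] at key
  simpa only [Real.fourier_real_eq] using key

/-- The multipliers of the construction: smooth nonnegative `1`-periodic functions with mean `1`
whose remaining Fourier coefficients are dominated by `ε * W`. Periodicity is encoded in the
Fourier expansion. -/
structure IsNearlyFlat (W : ℝ → ℝ) (ε : ℝ) (f : ℝ → ℝ) : Prop where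
  contDiff : ContDiff ℝ ∞ f
  nonneg : ∀ x, 0 ≤ f x
  exists_hasSum : ∃ a : ℤ → ℂ, a 0 = 1 ∧ (∀ m ≠ 0, ‖a m‖ ≤ ε * W m) ∧
    ∀ x, HasSum (fun m : ℤ => a m * 𝐞 (m * x)) (f x : ℂ)

theorem IsSubpolynomialWeight.exists_norm_fourier_mul_sub_le {W : ℝ → ℝ}
    (hW : IsSubpolynomialWeight W) :
    ∃ B > 0, ∀ {ε G : ℝ} {f : ℝ → ℝ} {g : ℝ → ℂ}, IsNearlyFlat W ε f → Integrable g →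
      (∀ ξ, ‖𝓕 g ξ‖ ≤ G / (1 + |ξ|) ^ 3) →
      ∀ ξ, ‖𝓕 (fun x => g x * f x) ξ - 𝓕 g ξ‖ ≤ B * G * ε * W ξ := by
  obtain ⟨C, C_pos, hC⟩ := hW.exists_le_mul_one_add_abs_sub
  obtain ⟨S, S_pos, hS⟩ := exists_tsum_one_div_one_add_abs_sub_sq_le
  refine ⟨C * S, by positivity, fun {ε G f g} hf hg hG ξ => ?_⟩
  obtain ⟨a, a_zero, a_le, hasSum_f⟩ := hf.exists_hasSum
  have G_nonneg : 0 ≤ G := by simpa using (norm_nonneg _).trans (hG 0)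
  have ε_nonneg : 0 ≤ ε :=
    nonneg_of_mul_nonneg_left ((norm_nonneg _).trans (a_le 1 one_ne_zero)) (hW.pos _)
  have hasSum_sub := (hasSum_fourier_mul hg hasSum_f ξ).sub (hasSum_ite_eq 0 (𝓕 g ξ))
  have term_le (m : ℤ) : ‖a m * 𝓕 g (ξ - m) - if m = 0 then 𝓕 g ξ else 0‖ ≤
      C * G * ε * W ξ * (1 / (1 + |ξ - m|) ^ 2) := by
    have W_pos := hW.pos ξ
    rcases eq_or_ne m 0 with rfl | hm
    · simp only [a_zero, Int.cast_zero, sub_zero, one_mul, if_true, sub_self, norm_zero]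
      positivity
    · rw [if_neg hm, sub_zero, norm_mul]
      calc ‖a m‖ * ‖𝓕 g (ξ - m)‖
          ≤ ε * (C * W ξ * (1 + |ξ - m|)) * (G / (1 + |ξ - m|) ^ 3) := by
            gcongr
            · exact (a_le m hm).trans (by gcongr; exact hC m ξ)
            · exact hG _
        _ = _ := by field_simp
  rw [← hasSum_sub.tsum_eq]
  refine (tsum_of_norm_bounded ((hS ξ).1.hasSum.mul_left _) term_le).trans ?_
  calc C * G * ε * W ξ * ∑' m : ℤ, 1 / (1 + |ξ - m|) ^ 2 ≤ C * G * ε * W ξ * S := by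
        have := (hW.pos ξ).le
        gcongr
        exact (hS ξ).2
    _ = C * S * G * ε * W ξ := by ring

/-! ### Smooth densities and their periodizations -/

/-- A smooth compactly supported probability density; the successive approximations to the limiting
measure are of this form. -/
structure IsTestDensity (g : ℝ → ℝ) : Prop where
  contDiff : ContDiff ℝ ∞ g
  hasCompactSupport : HasCompactSupport g
  nonneg : ∀ x, 0 ≤ g x
  integral_eq_one : ∫ x, g x = 1

namespace IsTestDensity

variable {g : ℝ → ℝ} (hg : IsTestDensity g)
include hg

theorem integrable : Integrable g :=
  hg.contDiff.continuous.integrable_of_hasCompactSupport hg.hasCompactSupport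

theorem contDiff_ofReal : ContDiff ℝ ∞ fun x => (g x : ℂ) :=
  Complex.ofRealCLM.contDiff.comp hg.contDiff

theorem hasCompactSupport_ofReal : HasCompactSupport fun x => (g x : ℂ) :=
  hg.hasCompactSupport.comp_left Complex.ofReal_zero

theorem exists_norm_fourier_le (n : ℕ) :
    ∃ G > 0, ∀ ξ, ‖𝓕 (fun x => (g x : ℂ)) ξ‖ ≤ G / (1 + |ξ|) ^ n :=
  exists_norm_fourier_le_div_one_add_abs_pow hg.contDiff_ofReal hg.hasCompactSupport_ofReal n

theorem norm_fourier_le_one (ξ : ℝ) : ‖𝓕 (fun x => (g x : ℂ)) ξ‖ ≤ 1 := by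
  refine (VectorFourier.norm_fourierIntegral_le_integral_norm _ _ _ _ _).trans_eq ?_
  simp only [Complex.norm_real, Real.norm_of_nonneg (hg.nonneg _), hg.integral_eq_one]

theorem fourier_zero : 𝓕 (fun x => (g x : ℂ)) 0 = 1 := by
  simp [Real.fourier_real_eq, integral_complex_ofReal, hg.integral_eq_one]

theorem dilate {η : ℝ} (hη : 0 < η) : IsTestDensity fun x => η⁻¹ * g (x / η) where
  contDiff := contDiff_const.mul (hg.contDiff.comp (contDiff_id.div_const η))
  hasCompactSupport := by
    have := hg.hasCompactSupport.comp_homeomorph (.mulRight₀ η⁻¹ (inv_ne_zero hη.ne'))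
    exact this.mul_left
  nonneg x := mul_nonneg (by positivity) (hg.nonneg _)
  integral_eq_one := by
    rw [integral_const_mul, Measure.integral_comp_div, abs_of_pos hη, hg.integral_eq_one,
      smul_eq_mul, mul_one, inv_mul_cancel₀ hη.ne']

end IsTestDensity

theorem exists_isTestDensity_tsupport_subset_Icc :
    ∃ g, IsTestDensity g ∧ tsupport g ⊆ Icc 1 2 := by
  let bump : ContDiffBump (3 / 2 : ℝ) := ⟨1 / 4, 1 / 2, by norm_num, by norm_num⟩
  refine ⟨bump.normed volume, ⟨bump.contDiff_normed, bump.hasCompactSupport_normed,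
    bump.nonneg_normed, bump.integral_normed⟩, ?_⟩
  rw [bump.tsupport_normed_eq, Real.closedBall_eq_Icc]
  exact Icc_subset_Icc (by norm_num) (by norm_num)

theorem fourier_dilate (g : ℝ → ℂ) {η : ℝ} (hη : 0 < η) (ξ : ℝ) :
    𝓕 (fun x => η⁻¹ • g (x / η)) ξ = 𝓕 g (η * ξ) := by
  have change_var := Measure.integral_comp_div (fun y => 𝐞 (-(y * (η * ξ))) • g y) η
  have phase (x : ℝ) : x / η * (η * ξ) = x * ξ := by field_simp
  simp only [Real.fourier_real_eq, smul_comm _ η⁻¹, integral_smul]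
  simp only [phase, abs_of_pos hη] at change_var
  rw [change_var, inv_smul_smul₀ hη.ne']

theorem tsupport_dilate_subset (g : ℝ → ℝ) (η : ℝ) :
    tsupport (fun x => η⁻¹ * g (x / η)) ⊆ {x | x / η ∈ tsupport g} :=
  tsupport_mul_subset_right.trans (tsupport_comp_subset_preimage g (continuous_id.div_const η))

theorem abs_pow_mul_norm_fourier_dilate_le {g : ℝ → ℂ} {n : ℕ} {A η : ℝ}
    (hA : ∀ ξ, |ξ| ^ n * ‖𝓕 g ξ‖ ≤ A) (hη : 0 < η) (ξ : ℝ) :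
    |ξ| ^ n * ‖𝓕 (fun x => η⁻¹ • g (x / η)) ξ‖ ≤ A / η ^ n := by
  rw [fourier_dilate g hη, le_div_iff₀ (by positivity)]
  calc |ξ| ^ n * ‖𝓕 g (η * ξ)‖ * η ^ n = |η * ξ| ^ n * ‖𝓕 g (η * ξ)‖ := by
        rw [abs_mul, abs_of_pos hη]
        ring
    _ ≤ A := hA _

theorem exists_isTestDensity_tsupport_subset_Icc_two_mul (n : ℕ) :
    ∃ A > 0, ∀ {η : ℝ}, 0 < η → ∃ φ, IsTestDensity φ ∧ tsupport φ ⊆ Icc η (2 * η) ∧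
      ∀ ξ, |ξ| ^ n * ‖𝓕 (fun x => (φ x : ℂ)) ξ‖ ≤ A / η ^ n := by
  obtain ⟨ψ, hψ, tsupport_ψ⟩ := exists_isTestDensity_tsupport_subset_Icc
  obtain ⟨A, A_pos, hA⟩ := hψ.exists_norm_fourier_le n
  have fourier_ψ (ξ : ℝ) : |ξ| ^ n * ‖𝓕 (fun x => (ψ x : ℂ)) ξ‖ ≤ A := by
    calc |ξ| ^ n * ‖𝓕 (fun x => (ψ x : ℂ)) ξ‖ ≤ (1 + |ξ|) ^ n * (A / (1 + |ξ|) ^ n) := by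
          gcongr
          · linarith
          · exact hA ξ
      _ = A := mul_div_cancel₀ _ (by positivity)
  refine ⟨A, A_pos, fun {η} hη => ⟨_, hψ.dilate hη, fun x hx => ?_, fun ξ => ?_⟩⟩
  · obtain ⟨one_le, le_two⟩ := tsupport_ψ (tsupport_dilate_subset ψ η hx)
    exact ⟨(one_le_div₀ hη).1 one_le, (div_le_iff₀ hη).1 le_two⟩
  · simpa using abs_pow_mul_norm_fourier_dilate_le fourier_ψ hη ξ

/-- The `1`-periodic function `y ↦ ∑ₙ φ(y + n)` attached to a compactly supported `φ`. -/
noncomputable def periodization (φ : ℝ → ℝ) (y : ℝ) : ℝ := ∑' n : ℤ, φ (y + n)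

theorem locallyFinite_tsupport_comp_add_intCast {φ : ℝ → ℝ} (hφ : HasCompactSupport φ) :
    LocallyFinite fun n : ℤ => tsupport fun y => φ (y + n) := by
  intro y
  refine ⟨closedBall y 1, closedBall_mem_nhds y one_pos, ?_⟩
  have isCompact_sub : IsCompact (tsupport φ - closedBall y 1) :=
    sub_eq_add_neg (tsupport φ) _ ▸ hφ.isCompact.add (isCompact_closedBall y 1).neg
  refine Finite.subset (Int.tendsto_coe_cofinite.eventually isCompact_sub.compl_mem_cocompact) ?_
  rintro n ⟨z, hz, hzy⟩ hn
  have hz' := tsupport_comp_subset_preimage φ (continuous_add_const (n : ℝ)) hz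
  exact hn ⟨z + n, hz', z, hzy, by ring⟩

theorem contDiff_periodization {φ : ℝ → ℝ} (hφ : ContDiff ℝ ∞ φ) (hφ' : HasCompactSupport φ) :
    ContDiff ℝ ∞ (periodization φ) := by
  rw [contDiff_iff_contDiffAt]
  intro y
  have locallyFinite : LocallyFinite fun n : ℤ => Function.support fun y => φ (y + n) :=
    (locallyFinite_tsupport_comp_add_intCast hφ').subset fun n => subset_tsupport _
  obtain ⟨I, hI⟩ := locallyFinite.exists_finset_support y
  have contDiff_sum : ContDiff ℝ ∞ fun z => ∑ n ∈ I, φ (z + n) :=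
    .sum fun n _ => hφ.comp (contDiff_id.add contDiff_const)
  refine contDiff_sum.contDiffAt.congr_of_eventuallyEq ?_
  filter_upwards [hI] with z hz
  exact tsum_eq_sum' hz

theorem tsupport_periodization_subset {φ : ℝ → ℝ} (hφ : HasCompactSupport φ) :
    tsupport (periodization φ) ⊆ {y | ∃ n : ℤ, y + n ∈ tsupport φ} := by
  have support_subset : Function.support (periodization φ) ⊆
      ⋃ n : ℤ, tsupport fun y => φ (y + n) := by
    intro y hy
    obtain ⟨n, hn⟩ : ∃ n : ℤ, φ (y + n) ≠ 0 := by
      by_contra! h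
      exact hy (by simp only [periodization, h, tsum_zero])
    exact mem_iUnion.2 ⟨n, subset_tsupport _ hn⟩
  have isClosed := (locallyFinite_tsupport_comp_add_intCast hφ).isClosed_iUnion
    fun n => isClosed_tsupport _
  refine (closure_minimal support_subset isClosed).trans (iUnion_subset fun n y hy => ⟨n, ?_⟩)
  exact tsupport_comp_subset_preimage φ (continuous_add_const (n : ℝ)) hy

theorem IsTestDensity.hasSum_periodization {φ : ℝ → ℝ} (hφ : IsTestDensity φ) (y : ℝ) :
    HasSum (fun j : ℤ => 𝓕 (fun x => (φ x : ℂ)) j * 𝐞 (j * y)) (periodization φ y : ℂ) := by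
  obtain ⟨G, -, hG⟩ := hφ.exists_norm_fourier_le 2
  obtain ⟨S, -, hS⟩ := exists_tsum_one_div_one_add_abs_sub_sq_le
  have summable : Summable fun j : ℤ => 𝓕 (fun x => (φ x : ℂ)) j * 𝐞 (j * y) := by
    refine .of_norm_bounded ((hS 0).1.mul_left G) fun j => ?_
    rw [norm_mul, Circle.norm_coe, mul_one, mul_one_div, zero_sub, abs_neg]
    exact hG j
  have poisson := SchwartzMap.tsum_eq_tsum_fourier
    (hφ.hasCompactSupport_ofReal.toSchwartzMap hφ.contDiff_ofReal) y
  convert summable.hasSum using 1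
  rw [periodization, Complex.ofReal_tsum]
  refine poisson.trans (tsum_congr fun j => ?_)
  rw [fourier_coe_apply, Real.fourierChar_apply, SchwartzMap.fourier_coe]
  congr 2
  push_cast
  ring

/-! ### Averages of periodic bumps over primes -/

theorem card_primeFactors_le_log (n : ℕ) : n.primeFactors.card ≤ Nat.log 2 n := by
  rcases eq_or_ne n 0 with rfl | hn
  · simp
  refine Nat.le_log_of_pow_le one_lt_two ?_
  calc 2 ^ n.primeFactors.card ≤ ∏ q ∈ n.primeFactors, q :=
        Finset.pow_card_le_prod _ _ _ fun q hq => (Nat.prime_of_mem_primeFactors hq).two_le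
    _ ≤ n := Nat.le_of_dvd (Nat.pos_of_ne_zero hn) n.prod_primeFactors_dvd

theorem eventually_sqrt_le_primeCounting :
    ∀ᶠ X : ℕ in atTop, √X ≤ (Nat.primeCounting X : ℝ) := by
  have log_le : ∀ᶠ x : ℝ in atTop, Real.log x ≤ 1 / 4 * x ^ (1 / 2 : ℝ) := by
    filter_upwards [(isLittleO_log_rpow_atTop (half_pos one_pos)).bound
      (by norm_num : (0 : ℝ) < 1 / 4), eventually_ge_atTop 1] with x hx one_le
    rwa [Real.norm_of_nonneg (Real.log_nonneg one_le), Real.norm_of_nonneg (by positivity)] at hx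
  filter_upwards [tendsto_natCast_atTop_atTop.eventually log_le, eventually_ge_atTop 4]
    with X hX four_le
  have X_ge : (4 : ℝ) ≤ X := by exact_mod_cast four_le
  have log_pos : 0 < Real.log X := Real.log_pos (by linarith)
  have log_succ_le : Real.log (X + 1) ≤ 2 * Real.log X := by
    rw [← Real.log_rpow (by linarith), Real.rpow_two]
    gcongr
    nlinarith
  refine le_trans ?_ (Chebyshev.pi_ge X)
  rw [le_div_iff₀ log_pos]
  rw [← Real.sqrt_eq_rpow] at hX
  have two_le_sqrt : 2 ≤ √(X : ℝ) := Real.le_sqrt_of_sq_le (by linarith)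
  nlinarith [Real.log_two_gt_d9, Real.sq_sqrt (by linarith : (0 : ℝ) ≤ X)]

/-- The average over the primes `q ≤ X` of the `1/q`-periodic functions `x ↦ ∑ₙ φ(qx + n)`. When
`φ` is concentrated near `0`, it is concentrated near the fractions with denominator `q`. -/
noncomputable def primeAverage (φ : ℝ → ℝ) (X : ℕ) (x : ℝ) : ℝ :=
  (Nat.primeCounting X : ℝ)⁻¹ * ∑ q ∈ Nat.primesLE X, periodization φ (q * x)

/-- The Fourier coefficients of `primeAverage φ X`. Those with `m ≠ 0` are small because few primes
divide `m`. -/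
noncomputable def primeAverageCoeff (φ : ℝ → ℝ) (X : ℕ) (m : ℤ) : ℂ :=
  (Nat.primeCounting X : ℂ)⁻¹ *
    ∑ q ∈ Nat.primesLE X with q ∣ m.natAbs, 𝓕 (fun x => (φ x : ℂ)) (m / q)

theorem tsupport_primeAverage_subset {φ : ℝ → ℝ} (hφ : HasCompactSupport φ) (X : ℕ) :
    tsupport (primeAverage φ X) ⊆
      {x | ∃ q ∈ Nat.primesLE X, ∃ n : ℤ, q * x + n ∈ tsupport φ} := by
  have support_subset : Function.support (primeAverage φ X) ⊆
      ⋃ q ∈ Nat.primesLE X, tsupport fun x => periodization φ (q * x) := by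
    intro x hx
    obtain ⟨q, hq, hqx⟩ := Finset.exists_ne_zero_of_sum_ne_zero (right_ne_zero_of_mul hx)
    exact mem_iUnion₂.2 ⟨q, hq, subset_tsupport _ hqx⟩
  have isClosed : IsClosed (⋃ q ∈ Nat.primesLE X, tsupport fun x => periodization φ (q * x)) :=
    (Nat.primesLE X).finite_toSet.isClosed_biUnion fun q _ => isClosed_tsupport _
  refine (closure_minimal support_subset isClosed).trans
    (iUnion₂_subset fun q hq x hx => ⟨q, hq, ?_⟩)
  exact tsupport_periodization_subset hφ
    (tsupport_comp_subset_preimage _ (continuous_const_mul (q : ℝ)) hx)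

section

variable {φ : ℝ → ℝ} (hφ : IsTestDensity φ) (X : ℕ)
include hφ

theorem contDiff_primeAverage : ContDiff ℝ ∞ (primeAverage φ X) :=
  contDiff_const.mul <| .sum fun _ _ =>
    (contDiff_periodization hφ.contDiff hφ.hasCompactSupport).comp (contDiff_const.mul contDiff_id)

theorem primeAverage_nonneg (x : ℝ) : 0 ≤ primeAverage φ X x :=
  mul_nonneg (by positivity) <| Finset.sum_nonneg fun _ _ => tsum_nonneg fun _ => hφ.nonneg _

theorem hasSum_periodization_mul {q : ℕ} (hq : q ≠ 0) (x : ℝ) :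
    HasSum (fun m : ℤ => if q ∣ m.natAbs then 𝓕 (fun x => (φ x : ℂ)) (m / q) * 𝐞 (m * x) else 0)
      (periodization φ (q * x) : ℂ) := by
  have injective : Function.Injective fun j : ℤ => (q : ℤ) * j :=
    mul_right_injective₀ (by exact_mod_cast hq)
  rw [← injective.hasSum_iff]
  · have : (q : ℝ) ≠ 0 := by exact_mod_cast hq
    refine (hφ.hasSum_periodization (q * x)).congr_fun fun j => ?_
    rw [Function.comp_apply, if_pos (Int.natCast_dvd.1 (dvd_mul_right _ j)), Int.cast_mul,
      Int.cast_natCast, mul_div_cancel_left₀ _ this]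
    ring_nf
  · rintro m hm
    refine if_neg fun h => hm ?_
    obtain ⟨j, rfl⟩ := Int.natCast_dvd.2 h
    exact mem_range_self j

theorem hasSum_primeAverage (x : ℝ) :
    HasSum (fun m : ℤ => primeAverageCoeff φ X m * 𝐞 (m * x)) (primeAverage φ X x : ℂ) := by
  have h := (hasSum_sum (s := Nat.primesLE X) fun q hq => hasSum_periodization_mul hφ
    (Nat.prime_of_mem_primesLE hq).ne_zero x).mul_left (Nat.primeCounting X : ℂ)⁻¹
  simp only [primeAverage]
  push_cast
  refine h.congr_fun fun m => ?_
  rw [primeAverageCoeff, mul_assoc, Finset.sum_mul, Finset.sum_filter]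

theorem primeAverageCoeff_zero {X : ℕ} (hX : 2 ≤ X) : primeAverageCoeff φ X 0 = 1 := by
  have : (Nat.primeCounting X : ℂ) ≠ 0 := by
    exact_mod_cast Nat.primeCounting_eq_zero_iff.not.2 (not_le.2 hX)
  simp [primeAverageCoeff, hφ.fourier_zero, Nat.primesLE_card_eq_primeCounting, this]

theorem norm_primeAverageCoeff_le {m : ℤ} (hm : m ≠ 0) :
    ‖primeAverageCoeff φ X m‖ ≤ Real.logb 2 |(m : ℝ)| / Nat.primeCounting X := by
  have card_le : ({q ∈ Nat.primesLE X | q ∣ m.natAbs}.card : ℝ) ≤ Real.logb 2 |(m : ℝ)| := by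
    rw [← Int.cast_abs, ← Nat.cast_natAbs]
    refine le_trans ?_ (Real.natLog_le_logb _ _)
    norm_cast
    refine (Finset.card_le_card fun q hq => ?_).trans (card_primeFactors_le_log m.natAbs)
    obtain ⟨hq, q_dvd⟩ := Finset.mem_filter.1 hq
    exact Nat.mem_primeFactors.2 ⟨Nat.prime_of_mem_primesLE hq, q_dvd, Int.natAbs_ne_zero.2 hm⟩
  rw [primeAverageCoeff, norm_mul, norm_inv, Complex.norm_natCast, div_eq_inv_mul]
  gcongr
  refine (norm_sum_le_of_le _ fun q _ => hφ.norm_fourier_le_one _).trans ?_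
  rwa [Finset.sum_const, nsmul_one]

end

theorem abs_pow_mul_norm_primeAverageCoeff_le {φ : ℝ → ℝ} {A : ℝ} {n : ℕ}
    (hA : ∀ ξ, |ξ| ^ n * ‖𝓕 (fun x => (φ x : ℂ)) ξ‖ ≤ A) (X : ℕ) (m : ℤ) :
    |(m : ℝ)| ^ n * ‖primeAverageCoeff φ X m‖ ≤ X ^ n * A := by
  have A_nonneg : 0 ≤ A := le_trans (by positivity) (hA 0)
  have term_le {q : ℕ} (hq : q ∈ Nat.primesLE X) :
      |(m : ℝ)| ^ n * ‖𝓕 (fun x => (φ x : ℂ)) (m / q)‖ ≤ X ^ n * A := by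
    have q_pos : (0 : ℝ) < q := by exact_mod_cast (Nat.prime_of_mem_primesLE hq).pos
    have q_le : (q : ℝ) ≤ X := by exact_mod_cast Nat.le_of_mem_primesLE hq
    calc |(m : ℝ)| ^ n * ‖𝓕 (fun x => (φ x : ℂ)) (m / q)‖
        = q ^ n * (|(m : ℝ) / q| ^ n * ‖𝓕 (fun x => (φ x : ℂ)) (m / q)‖) := by
          rw [abs_div, abs_of_pos q_pos, ← mul_assoc, ← mul_pow, mul_div_cancel₀ _ q_pos.ne']
      _ ≤ X ^ n * A := by gcongr; exact hA _
  have card_le : ({q ∈ Nat.primesLE X | q ∣ m.natAbs}.card : ℝ) ≤ Nat.primeCounting X := by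
    rw [← Nat.primesLE_card_eq_primeCounting]
    exact_mod_cast Finset.card_filter_le _ _
  rw [primeAverageCoeff, norm_mul, norm_inv, Complex.norm_natCast]
  calc |(m : ℝ)| ^ n * ((Nat.primeCounting X : ℝ)⁻¹ *
        ‖∑ q ∈ Nat.primesLE X with q ∣ m.natAbs, 𝓕 (fun x => (φ x : ℂ)) (m / q)‖)
      ≤ (Nat.primeCounting X : ℝ)⁻¹ * ∑ q ∈ Nat.primesLE X with q ∣ m.natAbs,
          |(m : ℝ)| ^ n * ‖𝓕 (fun x => (φ x : ℂ)) (m / q)‖ := by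
        rw [mul_left_comm, ← Finset.mul_sum]
        gcongr
        exact norm_sum_le _ _
    _ ≤ (Nat.primeCounting X : ℝ)⁻¹ * (Nat.primeCounting X * (X ^ n * A)) := by
        gcongr
        refine (Finset.sum_le_card_nsmul _ _ _ fun q hq =>
          term_le (Finset.mem_of_mem_filter q hq)).trans ?_
        rw [nsmul_eq_mul]
        gcongr
    _ ≤ X ^ n * A := by
        rw [← mul_assoc]
        exact mul_le_of_le_one_left (by positivity) inv_mul_le_one

/-- The points close to a fraction with denominator `b` to within `b⁻ᵏ`; the Liouville numbers are
the intersection of these sets over all `k`. -/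
def approxSet (k : ℕ) : Set ℝ :=
  {x | ∃ a b : ℤ, 1 < b ∧ x ≠ a / b ∧ |x - a / b| < 1 / (b : ℝ) ^ k}

theorem tsupport_primeAverage_subset_approxSet {φ : ℝ → ℝ} (hφ : HasCompactSupport φ) {X k : ℕ}
    (hφ' : tsupport φ ⊆ Ioc 0 (1 / (X : ℝ) ^ k)) :
    tsupport (primeAverage φ X) ⊆ approxSet k := by
  refine (tsupport_primeAverage_subset hφ X).trans ?_
  rintro x ⟨q, hq, n, hn⟩
  obtain ⟨t_pos, t_le⟩ := hφ' hn
  have one_lt : 1 < q := Nat.one_lt_of_mem_primesLE hq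
  have q_le : (q : ℝ) ≤ X := by exact_mod_cast Nat.le_of_mem_primesLE hq
  have one_lt' : (1 : ℝ) < q := by exact_mod_cast one_lt
  have q_pos : (0 : ℝ) < q := by linarith
  have sub_eq : x - ((-n : ℤ) : ℝ) / ((q : ℤ) : ℝ) = (q * x + n) / q := by
    push_cast
    field_simp
    ring
  refine ⟨-n, q, by exact_mod_cast one_lt, fun h => ?_, ?_⟩
  · rw [← sub_eq_zero, sub_eq] at h
    exact (div_pos t_pos q_pos).ne' h
  · rw [sub_eq, abs_of_pos (div_pos t_pos q_pos), Int.cast_natCast]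
    calc (q * x + n) / q < q * x + n := div_lt_self t_pos one_lt'
      _ ≤ 1 / (X : ℝ) ^ k := t_le
      _ ≤ 1 / (q : ℝ) ^ k := by gcongr

namespace IsSubpolynomialWeight

variable {W : ℝ → ℝ} (hW : IsSubpolynomialWeight W) {ε : ℝ}
include hW

theorem eventually_logb_div_primeCounting_le (hε : 0 < ε) {c : ℕ} (hc : c ≠ 0) :
    ∀ᶠ X : ℕ in atTop,
      Real.logb 2 ((X : ℝ) ^ c) / Nat.primeCounting X ≤ ε * W ((X : ℝ) ^ c) := by
  have log_two_pos : 0 < Real.log 2 := Real.log_pos one_lt_two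
  have exponent_pos : 0 < (1 / (2 * c) : ℝ) := by positivity
  have tendsto_pow : Tendsto (fun X : ℕ => (X : ℝ) ^ c) atTop atTop :=
    (tendsto_pow_atTop hc).comp tendsto_natCast_atTop_atTop
  filter_upwards [eventually_sqrt_le_primeCounting, eventually_ge_atTop 1,
    tendsto_pow.eventually ((hW.log_mul_rpow_neg_isLittleO exponent_pos).bound
      (mul_pos hε log_two_pos))] with X sqrt_le one_le hX
  have X_pos : (0 : ℝ) < X := by exact_mod_cast one_le
  have log_nonneg : 0 ≤ Real.log ((X : ℝ) ^ c) :=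
    Real.log_nonneg (one_le_pow₀ (by exact_mod_cast one_le))
  have rpow_eq : ((X : ℝ) ^ c) ^ (-(1 / (2 * c) : ℝ)) = (√X)⁻¹ := by
    rw [← Real.rpow_natCast, ← Real.rpow_mul X_pos.le, Real.sqrt_eq_rpow, ← Real.rpow_neg X_pos.le]
    congr 1
    field_simp
  rw [rpow_eq, Real.norm_of_nonneg (by positivity), Real.norm_of_nonneg (hW.pos _).le] at hX
  rw [Real.logb]
  calc Real.log ((X : ℝ) ^ c) / Real.log 2 / Nat.primeCounting X
      ≤ Real.log ((X : ℝ) ^ c) / Real.log 2 / √X := by gcongr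
    _ = Real.log ((X : ℝ) ^ c) * (√X)⁻¹ / Real.log 2 := by ring
    _ ≤ ε * W ((X : ℝ) ^ c) := by
      rw [div_le_iff₀ log_two_pos]
      linarith

theorem eventually_forall_ge_div_le (hε : 0 < ε) {A : ℝ} (hA : 0 < A) {c : ℕ} (hc : c ≠ 0) :
    ∀ᶠ X : ℕ in atTop, ∀ s ≥ (X : ℝ) ^ c, A / s ≤ ε * W s := by
  have tendsto_pow : Tendsto (fun X : ℕ => (X : ℝ) ^ c) atTop atTop :=
    (tendsto_pow_atTop hc).comp tendsto_natCast_atTop_atTop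
  refine tendsto_pow.eventually (eventually_forall_ge_atTop.2 ?_)
  filter_upwards [hW.inv_isLittleO.bound (div_pos hε hA), eventually_gt_atTop 0] with s hs s_pos
  rw [norm_inv, Real.norm_of_nonneg s_pos.le, Real.norm_of_nonneg (hW.pos s).le] at hs
  calc A / s = A * s⁻¹ := div_eq_mul_inv A s
    _ ≤ A * (ε / A * W s) := by gcongr
    _ = ε * W s := by field_simp

theorem norm_primeAverageCoeff_le {φ : ℝ → ℝ} (hφ : IsTestDensity φ) {A t : ℝ} {X : ℕ}
    (hε : 0 ≤ ε) (hA : ∀ ξ, |ξ| ^ 2 * ‖𝓕 (fun x => (φ x : ℂ)) ξ‖ ≤ A)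
    (small : Real.logb 2 t / Nat.primeCounting X ≤ ε * W t)
    (large : ∀ s ≥ t, X ^ 2 * A / s ^ 2 ≤ ε * W s) {m : ℤ} (hm : m ≠ 0) :
    ‖primeAverageCoeff φ X m‖ ≤ ε * W m := by
  rcases le_total |(m : ℝ)| t with le_t | ge_t
  · have W_le : W t ≤ W m := hW.le_of_abs_le (le_t.trans (le_abs_self t))
    calc ‖primeAverageCoeff φ X m‖ ≤ Real.logb 2 |(m : ℝ)| / Nat.primeCounting X :=
          _root_.norm_primeAverageCoeff_le hφ X hm
      _ ≤ Real.logb 2 t / Nat.primeCounting X := by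
        gcongr
        exact one_lt_two
      _ ≤ ε * W t := small
      _ ≤ ε * W m := by gcongr
  · have W_abs : W |(m : ℝ)| ≤ W m := hW.le_of_abs_le (abs_abs _).ge
    calc ‖primeAverageCoeff φ X m‖ ≤ X ^ 2 * A / |(m : ℝ)| ^ 2 := by
          rw [le_div_iff₀' (by positivity)]
          exact abs_pow_mul_norm_primeAverageCoeff_le hA X m
      _ ≤ ε * W |(m : ℝ)| := large _ ge_t
      _ ≤ ε * W m := by gcongr

theorem exists_isNearlyFlat (hε : 0 < ε) (k : ℕ) :
    ∃ f, IsNearlyFlat W ε f ∧ tsupport f ⊆ approxSet k := by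
  obtain ⟨A, A_pos, hA⟩ := exists_isTestDensity_tsupport_subset_Icc_two_mul 2
  obtain ⟨X, small, large, two_le⟩ := ((hW.eventually_logb_div_primeCounting_le hε
    (by positivity : 2 * k + 4 ≠ 0)).and ((hW.eventually_forall_ge_div_le hε A_pos
    (by positivity : 2 * k + 4 ≠ 0)).and (eventually_ge_atTop 2))).exists
  have X_ge : (2 : ℝ) ≤ X := by exact_mod_cast two_le
  obtain ⟨φ, hφ, tsupport_φ, fourier_φ⟩ := hA (η := 1 / (2 * X ^ k)) (by positivity)
  have tsupport_subset : tsupport φ ⊆ Ioc 0 (1 / (X : ℝ) ^ k) :=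
    tsupport_φ.trans fun x hx =>
      ⟨lt_of_lt_of_le (by positivity) hx.1, hx.2.trans_eq (by field_simp)⟩
  refine ⟨primeAverage φ X, ⟨contDiff_primeAverage hφ X, primeAverage_nonneg hφ X,
    primeAverageCoeff φ X, primeAverageCoeff_zero hφ two_le, fun m hm => ?_,
    hasSum_primeAverage hφ X⟩,
    tsupport_primeAverage_subset_approxSet hφ.hasCompactSupport tsupport_subset⟩
  refine hW.norm_primeAverageCoeff_le hφ hε.le fourier_φ small (fun s hs => ?_) hm
  have X_pow_le : 4 * (X : ℝ) ^ (2 * k + 2) ≤ s := by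
    calc 4 * (X : ℝ) ^ (2 * k + 2) ≤ X ^ 2 * X ^ (2 * k + 2) := by
          gcongr
          nlinarith
      _ = X ^ (2 * k + 4) := by ring
      _ ≤ s := hs
  have s_pos : 0 < s := lt_of_lt_of_le (by positivity) X_pow_le
  calc X ^ 2 * (A / (1 / (2 * X ^ k)) ^ 2) / s ^ 2
      = 4 * (X : ℝ) ^ (2 * k + 2) * A / s ^ 2 := by
        field_simp
        ring
    _ ≤ s * A / s ^ 2 := by gcongr
    _ = A / s := by field_simp
    _ ≤ ε * W s := large s hs

end IsSubpolynomialWeight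

/-! ### The iterated construction -/

section Refinement

variable {W f g : ℝ → ℝ} {κ D : ℝ}

theorem IsTestDensity.inv_integral_mul_mul (hg : IsTestDensity g) (hf : ContDiff ℝ ∞ f)
    (hf' : ∀ x, 0 ≤ f x) (hgf : 0 < ∫ x, g x * f x) :
    IsTestDensity fun x => (∫ y, g y * f y)⁻¹ * (g x * f x) where
  contDiff := contDiff_const.mul (hg.contDiff.mul hf)
  hasCompactSupport := hg.hasCompactSupport.mul_right.mul_left
  nonneg x := mul_nonneg (inv_nonneg.2 hgf.le) (mul_nonneg (hg.nonneg x) (hf' x))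
  integral_eq_one := by rw [integral_const_mul, inv_mul_cancel₀ hgf.ne']

theorem IsTestDensity.abs_integral_mul_sub_one_le (hg : IsTestDensity g)
    (hgf : ‖𝓕 (fun x => (g x * f x : ℂ)) 0 - 𝓕 (fun x => (g x : ℂ)) 0‖ ≤ κ) :
    |(∫ x, g x * f x) - 1| ≤ κ := by
  have fourier_mul_zero : 𝓕 (fun x => (g x * f x : ℂ)) 0 = (∫ x, g x * f x : ℝ) := by
    rw [← integral_complex_ofReal]
    simp [Real.fourier_real_eq]
  rwa [fourier_mul_zero, hg.fourier_zero, ← Complex.ofReal_one, ← Complex.ofReal_sub,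
    Complex.norm_real] at hgf

theorem IsTestDensity.norm_fourier_inv_integral_mul_mul_sub_le (hg : IsTestDensity g)
    (hgD : ∀ ξ, ‖𝓕 (fun x => (g x : ℂ)) ξ‖ ≤ D * W ξ)
    (hgf : ∀ ξ, ‖𝓕 (fun x => (g x * f x : ℂ)) ξ - 𝓕 (fun x => (g x : ℂ)) ξ‖ ≤ κ * W ξ)
    (hW0 : W 0 ≤ 1) (hκ : 0 ≤ κ) (hgf' : 1 / 2 ≤ ∫ x, g x * f x) (ξ : ℝ) :
    ‖𝓕 (fun x => (((∫ y, g y * f y)⁻¹ * (g x * f x) : ℝ) : ℂ)) ξ - 𝓕 (fun x => (g x : ℂ)) ξ‖ ≤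
      2 * κ * (1 + D) * W ξ := by
  set c := ∫ y, g y * f y
  set u := 𝓕 (fun x => (g x : ℂ)) ξ
  set v := 𝓕 (fun x => (g x * f x : ℂ)) ξ
  have c_pos : 0 < c := by linarith
  have fourier_eq : 𝓕 (fun x => ((c⁻¹ * (g x * f x) : ℝ) : ℂ)) ξ = c⁻¹ * v := by
    simp only [v, Real.fourier_real_eq, Circle.smul_def, smul_eq_mul, Complex.ofReal_mul,
      Complex.ofReal_inv, mul_left_comm _ (c : ℂ)⁻¹, integral_const_mul]
  have mass_le : ‖((1 - c : ℝ) : ℂ)‖ ≤ κ := by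
    rw [Complex.norm_real, Real.norm_eq_abs, abs_sub_comm]
    exact (hg.abs_integral_mul_sub_one_le (hgf 0)).trans (mul_le_of_le_one_right hκ hW0)
  have split : (c⁻¹ * v - u : ℂ) = (c⁻¹ : ℝ) * (v - u + (1 - c : ℝ) * u) := by
    have : (c : ℂ) ≠ 0 := by exact_mod_cast c_pos.ne'
    push_cast
    field_simp
    ring
  rw [fourier_eq, split, norm_mul, Complex.norm_of_nonneg (inv_nonneg.2 c_pos.le)]
  calc c⁻¹ * ‖v - u + (1 - c : ℝ) * u‖ ≤ 2 * (κ * W ξ + κ * (D * W ξ)) := by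
        gcongr
        · simpa using inv_anti₀ one_half_pos hgf'
        · refine (norm_add_le _ _).trans (add_le_add (hgf ξ) ?_)
          rw [norm_mul]
          exact mul_le_mul mass_le (hgD ξ) (norm_nonneg _) hκ
    _ = 2 * κ * (1 + D) * W ξ := by ring

end Refinement

section Construction

variable {W : ℝ → ℝ} (hW : IsSubpolynomialWeight W)
include hW

theorem IsSubpolynomialWeight.apply_zero_le_one : W 0 ≤ 1 :=
  le_of_mul_le_mul_right (by simpa using hW.mul_le_add 0 0) (hW.pos 0)

theorem IsTestDensity.exists_norm_fourier_le_mul_weight {g : ℝ → ℝ} (hg : IsTestDensity g) :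
    ∃ D > 0, ∀ ξ, ‖𝓕 (fun x => (g x : ℂ)) ξ‖ ≤ D * W ξ := by
  obtain ⟨C, C_pos, hC⟩ := hW.exists_inv_one_add_abs_le
  obtain ⟨G, G_pos, hG⟩ := hg.exists_norm_fourier_le 1
  refine ⟨G * C, by positivity, fun ξ => ?_⟩
  calc ‖𝓕 (fun x => (g x : ℂ)) ξ‖ ≤ G * (1 + |ξ|)⁻¹ := by simpa [div_eq_mul_inv] using hG ξ
    _ ≤ G * (C * W ξ) := by gcongr; exact hC ξ
    _ = G * C * W ξ := by ring

theorem IsTestDensity.exists_tsupport_subset_approxSet {g : ℝ → ℝ} (hg : IsTestDensity g) (k : ℕ)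
    {δ : ℝ} (hδ : 0 < δ) :
    ∃ g', IsTestDensity g' ∧ tsupport g' ⊆ tsupport g ∩ approxSet k ∧
      ∀ ξ, ‖𝓕 (fun x => (g' x : ℂ)) ξ - 𝓕 (fun x => (g x : ℂ)) ξ‖ ≤ δ * W ξ := by
  obtain ⟨B, B_pos, hB⟩ := hW.exists_norm_fourier_mul_sub_le
  obtain ⟨G, G_pos, hG⟩ := hg.exists_norm_fourier_le 3
  obtain ⟨D, D_pos, hD⟩ := hg.exists_norm_fourier_le_mul_weight hW
  let κ : ℝ := min (1 / 2) (δ / (2 * (1 + D)))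
  have κ_pos : 0 < κ := by positivity
  obtain ⟨f, hf, tsupport_f⟩ := hW.exists_isNearlyFlat (div_pos κ_pos (mul_pos B_pos G_pos)) k
  have fourier_mul_sub (ξ : ℝ) :
      ‖𝓕 (fun x => (g x * f x : ℂ)) ξ - 𝓕 (fun x => (g x : ℂ)) ξ‖ ≤ κ * W ξ := by
    refine (hB hf hg.integrable.ofReal hG ξ).trans_eq ?_
    field_simp
  have half_le : 1 / 2 ≤ ∫ x, g x * f x := by
    have mass_sub := hg.abs_integral_mul_sub_one_le ((fourier_mul_sub 0).trans
      ((mul_le_of_le_one_right κ_pos.le hW.apply_zero_le_one).trans (min_le_left _ _)))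
    linarith [(abs_le.1 mass_sub).1]
  refine ⟨_, hg.inv_integral_mul_mul hf.contDiff hf.nonneg (one_half_pos.trans_le half_le),
    ?_, fun ξ => ?_⟩
  · exact tsupport_mul_subset_right.trans (subset_inter tsupport_mul_subset_left
      (tsupport_mul_subset_right.trans tsupport_f))
  · have W_nonneg := (hW.pos ξ).le
    calc _ ≤ 2 * κ * (1 + D) * W ξ := hg.norm_fourier_inv_integral_mul_mul_sub_le
          hD fourier_mul_sub hW.apply_zero_le_one κ_pos.le half_le ξ
      _ ≤ 2 * (δ / (2 * (1 + D))) * (1 + D) * W ξ := by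
        gcongr
        exact min_le_right _ _
      _ = δ * W ξ := by field_simp

theorem exists_seq_isTestDensity :
    ∃ g : ℕ → ℝ → ℝ, (∀ n, IsTestDensity (g n)) ∧ Antitone (fun n => tsupport (g n)) ∧
      (∀ n, tsupport (g (n + 1)) ⊆ approxSet n) ∧
      ∃ C > 0, ∀ n ξ, ‖𝓕 (fun x => (g n x : ℂ)) ξ‖ ≤ C * W ξ := by
  obtain ⟨g₀, hg₀, -⟩ := exists_isTestDensity_tsupport_subset_Icc
  obtain ⟨D, D_pos, hD⟩ := hg₀.exists_norm_fourier_le_mul_weight hW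
  choose! next hnext tsupport_next fourier_next using
    fun (g : ℝ → ℝ) (n : ℕ) (hg : IsTestDensity g) =>
      hg.exists_tsupport_subset_approxSet hW n (pow_pos one_half_pos (n + 1) : (0 : ℝ) < _)
  obtain ⟨g, g_zero, g_succ⟩ : ∃ g : ℕ → ℝ → ℝ, g 0 = g₀ ∧ ∀ n, g (n + 1) = next (g n) n :=
    ⟨fun n => Nat.rec g₀ (fun n g => next g n) n, rfl, fun _ => rfl⟩
  have hg (n : ℕ) : IsTestDensity (g n) := by
    induction n with
    | zero => rwa [g_zero]
    | succ n ih => exact g_succ n ▸ hnext _ n ih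
  have fourier_sub (n : ℕ) (ξ : ℝ) :
      ‖𝓕 (fun x => (g (n + 1) x : ℂ)) ξ - 𝓕 (fun x => (g n x : ℂ)) ξ‖ ≤
        (1 / 2) ^ (n + 1) * W ξ :=
    g_succ n ▸ fourier_next _ n (hg n) ξ
  have tsupport_subset (n : ℕ) : tsupport (g (n + 1)) ⊆ tsupport (g n) ∩ approxSet n :=
    g_succ n ▸ tsupport_next _ n (hg n)
  have fourier_le (n : ℕ) (ξ : ℝ) :
      ‖𝓕 (fun x => (g n x : ℂ)) ξ‖ ≤ (D + (1 - (1 / 2) ^ n)) * W ξ := by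
    induction n with
    | zero => simpa [g_zero] using hD ξ
    | succ n ih =>
      have triangle := norm_le_norm_add_norm_sub' (𝓕 (fun x => (g (n + 1) x : ℂ)) ξ)
        (𝓕 (fun x => (g n x : ℂ)) ξ)
      refine (triangle.trans (add_le_add ih (fourier_sub n ξ))).trans_eq ?_
      ring
  refine ⟨g, hg, antitone_nat_of_succ_le fun n => (tsupport_subset n).trans inter_subset_left,
    fun n => (tsupport_subset n).trans inter_subset_right, D + 1, by positivity,
    fun n ξ => (fourier_le n ξ).trans ?_⟩
  have W_nonneg := (hW.pos ξ).le
  gcongr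
  exact sub_le_self _ (by positivity)

end Construction

/-! ### Weak limits -/

section WithDensity

variable {g : ℝ → ℝ} (hg : IsTestDensity g)
include hg

theorem IsTestDensity.isProbabilityMeasure_withDensity_ofReal :
    IsProbabilityMeasure (volume.withDensity fun x => ENNReal.ofReal (g x)) := by
  refine ⟨?_⟩
  rw [withDensity_apply _ .univ, Measure.restrict_univ,
    ← ofReal_integral_eq_lintegral_ofReal hg.integrable (ae_of_all _ hg.nonneg),
    hg.integral_eq_one, ENNReal.ofReal_one]

theorem IsTestDensity.fourierT_withDensity_ofReal (ξ : ℝ) :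
    fourierT (volume.withDensity fun x => ENNReal.ofReal (g x)) ξ =
      𝓕 (fun x => (g x : ℂ)) ξ := by
  have measurable_g : Measurable g := hg.contDiff.continuous.measurable
  rw [fourierT, integral_withDensity_eq_integral_toReal_smul (by fun_prop)
    (ae_of_all _ fun x => ENNReal.ofReal_lt_top), Real.fourier_real_eq]
  refine integral_congr_ae (ae_of_all _ fun x => ?_)
  simp only [ENNReal.toReal_ofReal (hg.nonneg x), Complex.real_smul, Circle.smul_def,
    Real.fourierChar_apply, smul_eq_mul, mul_comm (g x : ℂ)]
  push_cast
  ring_nf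

end WithDensity

theorem withDensity_ofReal_compl_tsupport (g : ℝ → ℝ) :
    volume.withDensity (fun x => ENNReal.ofReal (g x)) (tsupport g)ᶜ = 0 := by
  rw [withDensity_apply _ (isClosed_tsupport g).measurableSet.compl]
  refine (setLIntegral_congr_fun (isClosed_tsupport g).measurableSet.compl fun x hx => ?_).trans
    lintegral_zero
  simp [image_eq_zero_of_notMem_tsupport hx]

theorem continuous_fourierT (ξ : ℝ) :
    Continuous fun μ : ProbabilityMeasure ℝ => fourierT μ ξ := by
  let character : BoundedContinuousFunction ℝ ℂ :=
    .ofNormedAddCommGroup (fun x => Complex.exp (((-2 * π * ξ * x : ℝ) : ℂ) * Complex.I))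
      (by fun_prop) 1 fun x => (Complex.norm_exp_ofReal_mul_I _).le
  refine continuous_iff_continuousAt.2 fun μ => ?_
  exact (ProbabilityMeasure.tendsto_iff_forall_integral_rclike_tendsto ℂ).1 tendsto_id character

theorem exists_isProbabilityMeasure_iInter_of_norm_fourierT_le {ν : ℕ → Measure ℝ}
    (hν : ∀ n, IsProbabilityMeasure (ν n)) {K : ℕ → Set ℝ} (hK : Antitone K)
    (hK' : ∀ n, IsCompact (K n)) (hνK : ∀ n, ν n (K n)ᶜ = 0) {F : ℝ → ℝ}
    (hF : ∀ n ξ, ‖fourierT (ν n) ξ‖ ≤ F ξ) :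
    ∃ μ : Measure ℝ, IsProbabilityMeasure μ ∧ μ (⋂ n, K n)ᶜ = 0 ∧ ∀ ξ, ‖fourierT μ ξ‖ ≤ F ξ := by
  let P : ℕ → ProbabilityMeasure ℝ := fun n => ⟨ν n, hν n⟩
  have null_of_le {k n : ℕ} (hkn : k ≤ n) : ν n (K k)ᶜ = 0 :=
    measure_mono_null (compl_subset_compl.2 (hK hkn)) (hνK n)
  have tight : IsCompact (closure (range P)) := by
    refine isCompact_closure_of_isTightMeasureSet
      (isTightMeasureSet_iff_exists_isCompact_measure_compl_le.2 fun ε _ => ⟨K 0, hK' 0, ?_⟩)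
    rintro _ ⟨_, ⟨n, rfl⟩, rfl⟩
    exact (null_of_le n.zero_le).trans_le zero_le
  obtain ⟨μ, -, φ, hφ, tendsto_μ⟩ :=
    tight.tendsto_subseq fun n => subset_closure (mem_range_self n)
  refine ⟨μ, inferInstance, ?_, fun ξ => le_of_tendsto
    (((continuous_fourierT ξ).tendsto μ).comp tendsto_μ).norm (.of_forall fun n => hF _ ξ)⟩
  rw [compl_iInter]
  refine measure_iUnion_null fun k => le_antisymm ?_ zero_le
  have eventually_null : ∀ᶠ n in atTop, (P (φ n) : Measure ℝ) (K k)ᶜ = 0 := by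
    filter_upwards [eventually_ge_atTop k] with n hn
    exact null_of_le (hn.trans (hφ.id_le n))
  calc (μ : Measure ℝ) (K k)ᶜ ≤ liminf (fun n => (P (φ n) : Measure ℝ) (K k)ᶜ) atTop :=
        ProbabilityMeasure.le_liminf_measure_open_of_tendsto tendsto_μ
          (hK' k).isClosed.isOpen_compl
    _ = 0 := by rw [liminf_congr eventually_null, liminf_const]

theorem IsSubpolynomialWeight.exists_isProbabilityMeasure_liouville {W : ℝ → ℝ}
    (hW : IsSubpolynomialWeight W) :
    ∃ μ : Measure ℝ, IsProbabilityMeasure μ ∧ μ {x | Liouville x}ᶜ = 0 ∧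
      ∃ C > 0, ∀ ξ, ‖fourierT μ ξ‖ ≤ C * W ξ := by
  obtain ⟨g, hg, antitone, tsupport_subset, C, C_pos, hC⟩ := exists_seq_isTestDensity hW
  obtain ⟨μ, hμ, μ_null, μ_le⟩ := exists_isProbabilityMeasure_iInter_of_norm_fourierT_le
    (fun n => (hg n).isProbabilityMeasure_withDensity_ofReal) antitone
    (fun n => (hg n).hasCompactSupport)
    (fun n => withDensity_ofReal_compl_tsupport (g n))
    (fun n ξ => ((hg n).fourierT_withDensity_ofReal ξ).symm ▸ hC n ξ)
  have iInter_subset : ⋂ n, tsupport (g n) ⊆ {x | Liouville x} := fun x hx k =>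
    tsupport_subset k (mem_iInter.1 hx (k + 1))
  exact ⟨μ, hμ, measure_mono_null (compl_subset_compl.2 iInter_subset) μ_null, C, C_pos, μ_le⟩

theorem exp_neg_log_rpow_isBigO {p : ℝ} (hp : 1 ≤ p) :
    (fun ξ : ℝ => Real.exp (-Real.log |ξ| ^ p)) =O[cobounded ℝ] fun ξ => |ξ| ^ (-1 : ℝ) := by
  refine .of_bound 1 (hasBasis_cobounded_norm.eventually_iff.2
    ⟨Real.exp 1, trivial, fun ξ hξ => ?_⟩)
  have abs_pos : 0 < |ξ| := (Real.exp_pos 1).trans_le hξ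
  have one_le_log : 1 ≤ Real.log |ξ| := (Real.le_log_iff_exp_le abs_pos).2 hξ
  rw [Real.norm_of_nonneg (by positivity), Real.norm_of_nonneg (by positivity), one_mul,
    Real.rpow_neg_one, Real.exp_neg]
  gcongr
  calc |ξ| = Real.exp (Real.log |ξ|) := (Real.exp_log abs_pos).symm
    _ ≤ Real.exp (Real.log |ξ| ^ p) := by
      gcongr
      exact Real.self_le_rpow_of_one_le one_le_log hp

theorem exp_neg_log_one_add_rpow_le {p : ℝ} (hp : 0 ≤ p) {t : ℝ} (ht : 1 ≤ t) :
    Real.exp (-Real.log (1 + t) ^ p) ≤ Real.exp (-Real.log t ^ p) := by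
  gcongr
  · exact Real.log_nonneg ht
  · linarith

theorem stmt18 (p : ℝ) (hp : 0 < p) :
    (p < 1 →
      ∃ μ : Measure ℝ, IsProbabilityMeasure μ ∧ μ {x : ℝ | Liouville x}ᶜ = 0 ∧
        ∃ C > (0 : ℝ), ∃ M > (1 : ℝ),
          ∀ ξ : ℝ, M ≤ |ξ| →
            ‖fourierT μ ξ‖ ≤ C * Real.exp (-(Real.log |ξ|) ^ p)) ∧
    (1 ≤ p →
      ¬ ∃ μ : Measure ℝ, IsProbabilityMeasure μ ∧ μ {x : ℝ | Liouville x}ᶜ = 0 ∧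
        ∃ C > (0 : ℝ), ∃ M > (1 : ℝ),
          ∀ ξ : ℝ, M ≤ |ξ| →
            ‖fourierT μ ξ‖ ≤ C * Real.exp (-(Real.log |ξ|) ^ p)) := by
  constructor
  · intro hp1
    obtain ⟨μ, hμ, μ_null, C, C_pos, hC⟩ :=
      (isSubpolynomialWeight_exp_neg_log_rpow hp hp1).exists_isProbabilityMeasure_liouville
    refine ⟨μ, hμ, μ_null, C, C_pos, 2, one_lt_two, fun ξ hξ => (hC ξ).trans ?_⟩
    gcongr ?_ * ?_
    exact exp_neg_log_one_add_rpow_le hp.le (by linarith)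
  · rintro hp1 ⟨μ, hμ, μ_null, C, -, M, -, hM⟩
    have decay : fourierT μ =O[cobounded ℝ] fun ξ => Real.exp (-Real.log |ξ| ^ p) :=
      .of_bound C (hasBasis_cobounded_norm.eventually_iff.2
        ⟨M, trivial, fun ξ hξ => by simpa using hM ξ hξ⟩)
    have μ_liouville : μ {x | Liouville x} = 0 :=
      measure_liouville_eq_zero_of_fourierT_isBigO one_pos
        (decay.trans (exp_neg_log_rpow_isBigO hp1))
    have μ_univ : μ univ = 0 := by
      rw [← union_compl_self {x | Liouville x}]
      exact measure_union_null μ_liouville μ_null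
    exact one_ne_zero (measure_univ.symm.trans μ_univ)
end

section
/- There exist a Borel probability measure μ on ℝ with μ(ℝ \ 𝕃) = 0 and constants C > 0, M > e^e such that |μ̂(ξ)| ≤ C·|ξ|^(−1/log log |ξ|) for all ξ ∈ ℝ with |ξ| ≥ M. -/
/-!
The measure is the law of a random series `∑ k, X k / N k` with independent summands, where `X k` is
a uniformly random fraction `a / p` whose denominator is itself a random prime between `D k ^ 2` and
`D k ^ 4`. The sum of the first `k` terms is rational with denominator at most a fixed power of
`D (k - 1)`. As `N k` is a much larger power of `D (k - 1)`, the tails are tiny and the sum is a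
Liouville number.

By independence, the Fourier transform at `ξ` is bounded by that of any single summand, which is the
transform of `X k` at `ξ / N k`. The transform of the fractions with denominator `p` is small away
from the multiples of `p`; and since an integer below `D ^ (2 * K + 2)` has at most `K` prime
divisors above `D ^ 2`, a given frequency is close to a multiple of `p` for few primes `p` only.
This makes the transform of `X k` small on a range of frequencies reaching up to a large power of
`D k`, and these ranges cover all large `ξ`. The exponent `1 / (4 * K)` obtained at the `k`-th range
depends only on `k`, whereas `D k` can be chosen as large as desired afterwards, so that the decay
exponent may tend to zero arbitrarily slowly.
-/

open MeasureTheory Filter Set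

open ProbabilityTheory Topology
open scoped ENNReal Finset RealInnerProductSpace

/-! ### Fourier transforms of sums of independent variables -/

lemma fourierT_eq_charFun (μ : Measure ℝ) (ξ : ℝ) :
    fourierT μ ξ = charFun μ (-2 * Real.pi * ξ) := by
  simp only [fourierT, charFun_apply_real, Complex.ofReal_mul]

lemma norm_fourierT_le_one (μ : Measure ℝ) [IsProbabilityMeasure μ] (ξ : ℝ) :
    ‖fourierT μ ξ‖ ≤ 1 := by
  rw [fourierT_eq_charFun]
  exact norm_charFun_le_one _

lemma fourierT_dirac (x ξ : ℝ) :
    fourierT (Measure.dirac x) ξ =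
      Complex.exp (((-2 * Real.pi * ξ * x : ℝ) : ℂ) * Complex.I) :=
  integral_dirac _ _

lemma fourierT_map_div (μ : Measure ℝ) (r ξ : ℝ) :
    fourierT (μ.map (· / r)) ξ = fourierT μ (ξ / r) := by
  simp only [fourierT_eq_charFun, div_eq_inv_mul, charFun_map_mul]
  ring_nf

lemma tendsto_charFun_map {Ω ι E : Type*} {mΩ : MeasurableSpace Ω} {P : Measure Ω}
    [IsFiniteMeasure P] [NormedAddCommGroup E] [InnerProductSpace ℝ E] [MeasurableSpace E]
    [BorelSpace E] {l : Filter ι} [l.IsCountablyGenerated] {X : ι → Ω → E} {Y : Ω → E}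
    (hX : ∀ i, AEMeasurable (X i) P) (hY : AEMeasurable Y P)
    (hXY : ∀ᵐ ω ∂P, Tendsto (X · ω) l (𝓝 (Y ω))) (t : E) :
    Tendsto (fun i ↦ charFun (P.map (X i)) t) l (𝓝 (charFun (P.map Y) t)) := by
  have hcharFun {Z : Ω → E} (hZ : AEMeasurable Z P) :
      charFun (P.map Z) t = ∫ ω, Complex.exp (⟪Z ω, t⟫ * Complex.I) ∂P := by
    rw [charFun_apply, integral_map hZ]
    exact Measurable.aestronglyMeasurable (by fun_prop)
  simp only [hcharFun hY, fun i ↦ hcharFun (hX i)]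
  refine tendsto_integral_filter_of_dominated_convergence (fun _ ↦ 1) ?_ ?_
    (integrable_const 1) ?_
  · exact .of_forall fun i ↦ AEMeasurable.aestronglyMeasurable (by fun_prop (disch := exact hX i))
  · exact .of_forall fun i ↦ .of_forall fun ω ↦ (Complex.norm_exp_ofReal_mul_I _).le
  · filter_upwards [hXY] with ω hω
    exact ((Continuous.tendsto (by fun_prop : Continuous fun x : E ↦
      Complex.exp (⟪x, t⟫ * Complex.I)) _).comp hω)

lemma norm_charFun_map_le_of_hasSum {Ω ι E : Type*} {mΩ : MeasurableSpace Ω} {P : Measure Ω}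
    [IsProbabilityMeasure P] [Countable ι] [NormedAddCommGroup E] [InnerProductSpace ℝ E]
    [MeasurableSpace E] [BorelSpace E] [SecondCountableTopology E] {X : ι → Ω → E} {Y : Ω → E}
    (hX : ∀ i, AEMeasurable (X i) P) (hind : iIndepFun X P)
    (hsum : ∀ᵐ ω ∂P, HasSum (X · ω) (Y ω)) (i : ι) (t : E) :
    ‖charFun (P.map Y) t‖ ≤ ‖charFun (P.map (X i)) t‖ := by
  classical
  have hpartial (s : Finset ι) : AEMeasurable (fun ω ↦ ∑ j ∈ s, X j ω) P := by fun_prop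
  have hY : AEMeasurable Y P := aemeasurable_of_tendsto_metrizable_ae _ hpartial hsum
  refine le_of_tendsto (tendsto_charFun_map hpartial hY hsum t).norm ?_
  filter_upwards [eventually_ge_atTop {i}] with s his
  have his : i ∈ s := Finset.singleton_subset_iff.mp his
  have hfactor (j : ι) : ‖charFun (P.map (X j)) t‖ ≤ 1 :=
    have := Measure.isProbabilityMeasure_map (hX j)
    norm_charFun_le_one t
  rw [(hind.restrict s).charFun_map_fun_finsetSum_eq_prod fun j _ ↦ hX j, Finset.prod_apply,
    norm_prod, ← Finset.mul_prod_erase s _ his]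
  exact mul_le_of_le_one_right (norm_nonneg _)
    (Finset.prod_le_one (fun _ _ ↦ norm_nonneg _) fun j _ ↦ hfactor j)

/-- The law of the random series `∑ k, X k / N k`, where the `X k` are independent and `X k` has
law `ν k`. Where the series diverges, its sum is `0` by the convention for `tsum`. -/
noncomputable def scaledSumLaw (N : ℕ → ℝ) (ν : ℕ → Measure ℝ) : Measure ℝ :=
  (Measure.infinitePi ν).map fun x ↦ ∑' k, x k / N k

section scaledSumLaw

variable {N : ℕ → ℝ} {ν : ℕ → Measure ℝ} [∀ k, IsProbabilityMeasure (ν k)]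

lemma measurable_tsum_div (N : ℕ → ℝ) : Measurable fun x : ℕ → ℝ ↦ ∑' k, x k / N k :=
  Measurable.tsum fun k ↦ by fun_prop

instance isProbabilityMeasure_scaledSumLaw : IsProbabilityMeasure (scaledSumLaw N ν) :=
  Measure.isProbabilityMeasure_map (measurable_tsum_div N).aemeasurable

lemma norm_fourierT_scaledSumLaw_le
    (hsum : ∀ᵐ x ∂Measure.infinitePi ν, Summable fun k ↦ x k / N k) (k : ℕ) (ξ : ℝ) :
    ‖fourierT (scaledSumLaw N ν) ξ‖ ≤ ‖fourierT (ν k) (ξ / N k)‖ := by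
  have hind : iIndepFun (fun k x ↦ x k / N k) (Measure.infinitePi ν) :=
    iIndepFun_infinitePi (X := fun k y ↦ y / N k) fun k ↦ by fun_prop
  have hlaw : (Measure.infinitePi ν).map (fun x ↦ x k / N k) =
      (ν k).map (· / N k) := by
    rw [← Measure.infinitePi_map_eval ν k, Measure.map_map (by fun_prop) (by fun_prop)]
    rfl
  rw [← fourierT_map_div, ← hlaw, fourierT_eq_charFun, fourierT_eq_charFun]
  exact norm_charFun_map_le_of_hasSum
    (fun k ↦ ((measurable_pi_apply k).div_const _).aemeasurable) hind
    (hsum.mono fun _ hx ↦ hx.hasSum) k _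

end scaledSumLaw

/-! ### Uniform mixtures and exponential sums -/

/-- The average of the measures `μ i` over `i ∈ s`; it is `0` if `s = ∅`. -/
noncomputable def uniformMixture {ι α : Type*} [MeasurableSpace α] (s : Finset ι)
    (μ : ι → Measure α) : Measure α :=
  (#s : ℝ≥0∞)⁻¹ • ∑ i ∈ s, μ i

section uniformMixture

variable {ι α : Type*} {mα : MeasurableSpace α} {s : Finset ι}

lemma isProbabilityMeasure_uniformMixture {μ : ι → Measure α} (hs : s.Nonempty)
    (hμ : ∀ i ∈ s, IsProbabilityMeasure (μ i)) : IsProbabilityMeasure (uniformMixture s μ) where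
  measure_univ := by
    have hsum : ∑ i ∈ s, μ i univ = (#s : ℝ≥0∞) := by
      rw [Finset.sum_congr rfl fun i hi ↦ (hμ i hi).measure_univ, Finset.sum_const,
        nsmul_eq_mul, mul_one]
    rw [uniformMixture, Measure.smul_apply, Measure.finsetSum_apply, hsum, smul_eq_mul,
      ENNReal.inv_mul_cancel (by simpa using hs.ne_empty) (by simp)]

lemma ae_uniformMixture {μ : ι → Measure α} {p : α → Prop} (h : ∀ i ∈ s, ∀ᵐ x ∂μ i, p x) :
    ∀ᵐ x ∂uniformMixture s μ, p x := by
  refine Measure.ae_smul_measure ?_ _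
  rw [ae_iff, Measure.finsetSum_apply]
  exact Finset.sum_eq_zero fun i hi ↦ ae_iff.mp (h i hi)

instance isFiniteMeasure_uniformMixture {μ : ι → Measure α} [∀ i, IsFiniteMeasure (μ i)] :
    IsFiniteMeasure (uniformMixture s μ) := by
  rcases s.eq_empty_or_nonempty with rfl | hs
  · rw [uniformMixture, Finset.sum_empty, smul_zero]
    infer_instance
  · exact Measure.smul_finite _ (by simpa using hs.ne_empty)

lemma fourierT_uniformMixture {μ : ι → Measure ℝ} [∀ i, IsFiniteMeasure (μ i)] (ξ : ℝ) :
    fourierT (uniformMixture s μ) ξ = (#s : ℂ)⁻¹ * ∑ i ∈ s, fourierT (μ i) ξ := by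
  have hint (i) (_ : i ∈ s) : Integrable
      (fun x : ℝ ↦ Complex.exp (((-2 * Real.pi * ξ * x : ℝ) : ℂ) * Complex.I)) (μ i) :=
    .of_bound (by fun_prop) 1 (.of_forall fun x ↦ (Complex.norm_exp_ofReal_mul_I _).le)
  simp only [fourierT, uniformMixture, integral_smul_measure, integral_finsetSum_measure hint,
    ENNReal.toReal_inv, ENNReal.toReal_natCast, Complex.real_smul, Complex.ofReal_inv,
    Complex.ofReal_natCast]

lemma norm_fourierT_uniformMixture_le {μ : ι → Measure ℝ} [∀ i, IsFiniteMeasure (μ i)]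
    {f : ι → ℝ} {ξ : ℝ} (hf : ∀ i ∈ s, ‖fourierT (μ i) ξ‖ ≤ f i) :
    ‖fourierT (uniformMixture s μ) ξ‖ ≤ (∑ i ∈ s, f i) / #s := by
  rw [fourierT_uniformMixture, norm_mul, norm_inv, Complex.norm_natCast, inv_mul_eq_div]
  gcongr
  exact norm_sum_le_of_le s hf

end uniformMixture

/-- The uniform probability measure on the fractions `1/p, 2/p, …, p/p`. -/
noncomputable def uniformFractions (p : ℕ) : Measure ℝ :=
  uniformMixture (Finset.range p) fun a ↦ Measure.dirac ((a + 1 : ℝ) / p)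

instance isFiniteMeasure_uniformFractions (p : ℕ) : IsFiniteMeasure (uniformFractions p) :=
  isFiniteMeasure_uniformMixture

lemma isProbabilityMeasure_uniformFractions {p : ℕ} (hp : 0 < p) :
    IsProbabilityMeasure (uniformFractions p) :=
  isProbabilityMeasure_uniformMixture (by simpa using hp.ne') fun _ _ ↦ inferInstance

lemma four_mul_abs_sub_round_le_norm_exp_sub_one (y : ℝ) :
    4 * |y - round y| ≤ ‖Complex.exp (Complex.I * (2 * Real.pi * y : ℝ)) - 1‖ := by
  have hπ := Real.pi_pos
  have hperiod : |Real.sin (Real.pi * y)| = |Real.sin (Real.pi * (y - round y))| := by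
    rw [mul_sub, mul_comm Real.pi (round y : ℝ), Real.sin_sub_int_mul_pi, abs_mul, abs_zpow,
      abs_neg, abs_one, one_zpow, one_mul]
  have hjordan := Real.mul_abs_le_abs_sin (x := Real.pi * (y - round y)) (by
    rw [abs_mul, abs_of_pos hπ]
    nlinarith [abs_sub_round y])
  rw [abs_mul, abs_of_pos hπ, ← mul_assoc, div_mul_cancel₀ _ hπ.ne'] at hjordan
  rw [Complex.norm_exp_I_mul_ofReal_sub_one, mul_assoc, mul_div_cancel_left₀ _ two_ne_zero,
    norm_mul, Real.norm_two, Real.norm_eq_abs, hperiod]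
  linarith

lemma norm_geom_sum_le_two_div {z : ℂ} (hz : ‖z‖ = 1) (hz1 : z ≠ 1) (n : ℕ) :
    ‖∑ a ∈ Finset.range n, z ^ a‖ ≤ 2 / ‖z - 1‖ := by
  rw [geom_sum_eq hz1, norm_div]
  gcongr
  calc ‖z ^ n - 1‖ ≤ ‖z ^ n‖ + ‖(1 : ℂ)‖ := norm_sub_le _ _
    _ = 2 := by rw [norm_pow, hz, one_pow, norm_one]; norm_num

lemma fourierT_uniformFractions (p : ℕ) (t : ℝ) :
    fourierT (uniformFractions p) t =
      (p : ℂ)⁻¹ * (Complex.exp (Complex.I * (2 * Real.pi * (-(t / p)) : ℝ)) *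
        ∑ a ∈ Finset.range p, Complex.exp (Complex.I * (2 * Real.pi * (-(t / p)) : ℝ)) ^ a) := by
  rw [uniformFractions, fourierT_uniformMixture, Finset.card_range]
  congr 1
  rw [Finset.mul_sum]
  refine Finset.sum_congr rfl fun a _ ↦ ?_
  rw [fourierT_dirac, ← pow_succ', ← Complex.exp_nat_mul]
  push_cast
  ring_nf

lemma norm_fourierT_uniformFractions_le {p : ℕ} (hp : 0 < p) {t D : ℝ} (hD : 0 < D)
    (h : ∀ m : ℤ, D ≤ |t - m * p|) : ‖fourierT (uniformFractions p) t‖ ≤ 1 / D := by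
  have hp' : (0 : ℝ) < p := mod_cast hp
  set y : ℝ := -(t / p) with hy
  set z : ℂ := Complex.exp (Complex.I * (2 * Real.pi * y : ℝ)) with hz
  have hz_norm : ‖z‖ = 1 := Complex.norm_exp_I_mul_ofReal _
  have hy_round : D / p ≤ |y - round y| := by
    rw [div_le_iff₀ hp']
    calc D ≤ |t - (-round y : ℤ) * p| := h _
      _ = |y - round y| * p := by
        rw [← abs_of_pos hp', ← abs_mul, abs_of_pos hp', ← abs_neg, hy]
        congr 1
        push_cast
        field_simp
        ring
  have hz_sub : 4 * (D / p) ≤ ‖z - 1‖ :=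
    (mul_le_mul_of_nonneg_left hy_round zero_le_four).trans
      (four_mul_abs_sub_round_le_norm_exp_sub_one y)
  have hDp : 0 < 4 * (D / p) := by positivity
  have hz_ne : z ≠ 1 := sub_ne_zero.mp (norm_pos_iff.mp (hDp.trans_le hz_sub))
  calc ‖fourierT (uniformFractions p) t‖ = (p : ℝ)⁻¹ * ‖∑ a ∈ Finset.range p, z ^ a‖ := by
        rw [fourierT_uniformFractions, ← hz, norm_mul, norm_mul, hz_norm, one_mul, norm_inv,
          Complex.norm_natCast]
    _ ≤ (p : ℝ)⁻¹ * (2 / (4 * (D / p))) := by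
        gcongr
        exact (norm_geom_sum_le_two_div hz_norm hz_ne p).trans (by gcongr)
    _ = 1 / D / 2 := by field_simp; norm_num
    _ ≤ 1 / D := half_le_self (by positivity)

/-! ### Primes between `D ^ 2` and `D ^ 4` -/

lemma card_filter_dvd_le {S : Finset ℕ} {R K : ℕ} (hS : ∀ p ∈ S, p.Prime ∧ R ≤ p) {n : ℤ}
    (hn : n ≠ 0) (hlt : n.natAbs < R ^ (K + 1)) :
    #{p ∈ S | ((p : ℕ) : ℤ) ∣ n} ≤ K := by
  set T := {p ∈ S | ((p : ℕ) : ℤ) ∣ n}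
  have hTS (p) (hp : p ∈ T) : p ∈ S := Finset.filter_subset _ _ hp
  have hprod : ∏ p ∈ T, p ∣ n.natAbs := Finset.prod_primes_dvd _
    (fun p hp ↦ (hS p (hTS p hp)).1.prime)
    (fun p hp ↦ Int.natCast_dvd.mp (Finset.mem_filter.mp hp).2)
  have hpow : R ^ #T < R ^ (K + 1) := calc
    R ^ #T ≤ ∏ p ∈ T, p := Finset.pow_card_le_prod _ _ _ fun p hp ↦ (hS p (hTS p hp)).2
    _ ≤ n.natAbs := Nat.le_of_dvd (Int.natAbs_pos.mpr hn) hprod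
    _ < R ^ (K + 1) := hlt
  have hR : 0 < R := Nat.pos_of_ne_zero fun h ↦ by simp [h] at hlt
  by_contra! hK
  exact hpow.not_ge (Nat.pow_le_pow_right hR hK)

open scoped Classical in
lemma card_filter_near_multiple_le {S : Finset ℕ} {R K D : ℕ} (hS : ∀ p ∈ S, p.Prime ∧ R ≤ p)
    {t : ℝ} (hDt : D ≤ |t|) (htR : |t| + D < (R : ℝ) ^ (K + 1)) :
    #{p ∈ S | ∃ m : ℤ, |t - m * (p : ℕ)| < D} ≤ 2 * D * K := by
  set I : Finset ℤ := {n ∈ Finset.Icc (⌊t⌋ - D + 1) (⌊t⌋ + D) | |t - n| < D}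
  have hcardI : #I ≤ 2 * D := (Finset.card_filter_le _ _).trans (by rw [Int.card_Icc]; omega)
  have hcover : {p ∈ S | ∃ m : ℤ, |t - m * (p : ℕ)| < D} ⊆
      I.biUnion fun n ↦ {p ∈ S | ((p : ℕ) : ℤ) ∣ n} := by
    intro p hp
    obtain ⟨hpS, m, hm⟩ := Finset.mem_filter.mp hp
    have hm' : |t - (m * p : ℤ)| < D := by exact_mod_cast hm
    have hlower : ⌊t⌋ - D < m * p := by
      rify
      linarith [(abs_lt.mp hm).2, Int.floor_le t]
    have hupper : m * p < ⌊t⌋ + D + 1 := by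
      rify
      linarith [(abs_lt.mp hm).1, Int.lt_floor_add_one t]
    refine Finset.mem_biUnion.mpr ⟨m * p, Finset.mem_filter.mpr ⟨?_, hm'⟩,
      Finset.mem_filter.mpr ⟨hpS, dvd_mul_left _ _⟩⟩
    exact Finset.mem_Icc.mpr ⟨by omega, by omega⟩
  refine (Finset.card_le_card hcover).trans ((Finset.card_biUnion_le_card_mul _ _ K ?_).trans
    (Nat.mul_le_mul_right K hcardI))
  intro n hn
  have hnt : |t - n| < D := (Finset.mem_filter.mp hn).2
  refine card_filter_dvd_le hS ?_ ?_
  · rintro rfl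
    simp only [Int.cast_zero, sub_zero] at hnt
    exact hDt.not_gt hnt
  · have hn_abs : |(n : ℝ)| < (R : ℝ) ^ (K + 1) := by
      have := abs_sub_abs_le_abs_sub (n : ℝ) t
      rw [abs_sub_comm] at this
      linarith
    rify
    exact hn_abs

lemma eventually_rpow_le_primeCounting {s : ℝ} (hs : s < 1) :
    ∀ᶠ n : ℕ in atTop, (n : ℝ) ^ s ≤ n.primeCounting := by
  have hlog : ∀ᶠ n : ℕ in atTop, Real.log n ≤ 1 / 8 * (n : ℝ) ^ (1 - s) := by
    filter_upwards [tendsto_natCast_atTop_atTop.eventually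
      ((isLittleO_log_rpow_atTop (sub_pos.mpr hs)).bound (by norm_num : (0 : ℝ) < 1 / 8))] with n hn
    rw [Real.norm_of_nonneg (Real.log_natCast_nonneg n), Real.norm_of_nonneg (by positivity)] at hn
    exact hn
  have hlog_succ : ∀ᶠ n : ℕ in atTop, Real.log (n + 1) ≤ 1 / 8 * (n + 1) := by
    filter_upwards [(tendsto_natCast_atTop_atTop.comp (tendsto_add_atTop_nat 1)).eventually
      (Real.isLittleO_log_id_atTop.bound (by norm_num : (0 : ℝ) < 1 / 8))] with n hn
    simp only [Function.comp_apply, id_eq, Nat.cast_add, Nat.cast_one] at hn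
    rwa [Real.norm_of_nonneg (Real.log_nonneg (by linarith [Nat.cast_nonneg (α := ℝ) n])),
      Real.norm_of_nonneg (by positivity)] at hn
  filter_upwards [hlog, hlog_succ, eventually_ge_atTop 2] with n hn hn' hn2
  have hn2' : (2 : ℝ) ≤ n := mod_cast hn2
  have hlog2 : 1 / 2 < Real.log 2 := by linarith [Real.log_two_gt_d9]
  refine le_trans ?_ (Chebyshev.pi_ge n)
  rw [le_div_iff₀ (Real.log_pos (by linarith))]
  calc (n : ℝ) ^ s * Real.log n ≤ (n : ℝ) ^ s * (1 / 8 * (n : ℝ) ^ (1 - s)) := by gcongr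
    _ = 1 / 8 * n := by
      rw [mul_left_comm, ← Real.rpow_add (by linarith), add_sub_cancel, Real.rpow_one]
    _ ≤ n * Real.log 2 - Real.log (n + 1) := by nlinarith

/-- The primes between `D ^ 2` and `D ^ 4`, the denominators used at scale `D`. -/
def primeWindow (D : ℕ) : Finset ℕ := {p ∈ Finset.Icc (D ^ 2) (D ^ 4) | p.Prime}

lemma mem_primeWindow {D p : ℕ} :
    p ∈ primeWindow D ↔ (D ^ 2 ≤ p ∧ p ≤ D ^ 4) ∧ p.Prime := by
  rw [primeWindow, Finset.mem_filter, Finset.mem_Icc]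

lemma primeCounting_le_card_primeWindow_add (D : ℕ) :
    (D ^ 4).primeCounting ≤ #(primeWindow D) + D ^ 2 := by
  have hcover : Nat.primesLE (D ^ 4) ⊆ primeWindow D ∪ Finset.range (D ^ 2) := by
    intro p hp
    rw [Nat.mem_primesLE] at hp
    rw [Finset.mem_union, mem_primeWindow, Finset.mem_range]
    exact (le_or_gt (D ^ 2) p).imp (fun h ↦ ⟨⟨h, hp.1⟩, hp.2⟩) id
  calc (D ^ 4).primeCounting = #(Nat.primesLE (D ^ 4)) :=
        (Nat.primesLE_card_eq_primeCounting _).symm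
    _ ≤ #(primeWindow D) + #(Finset.range (D ^ 2)) :=
      (Finset.card_le_card hcover).trans (Finset.card_union_le _ _)
    _ = #(primeWindow D) + D ^ 2 := by rw [Finset.card_range]

lemma eventually_pow_three_le_card_primeWindow :
    ∀ᶠ D : ℕ in atTop, D ^ 3 ≤ #(primeWindow D) := by
  have hpi := (tendsto_pow_atTop (α := ℕ) four_ne_zero).eventually
    (eventually_rpow_le_primeCounting (s := 7 / 8) (by norm_num))
  filter_upwards [hpi, eventually_ge_atTop 4] with D hD hD4
  have hD4' : (4 : ℝ) ≤ D := mod_cast hD4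
  have hcount : ((D ^ 4).primeCounting : ℝ) ≤ #(primeWindow D) + (D : ℝ) ^ 2 :=
    mod_cast primeCounting_le_card_primeWindow_add D
  have hrpow : ((D ^ 4 : ℕ) : ℝ) ^ (7 / 8 : ℝ) = D ^ 3 * √D := by
    rw [Real.sqrt_eq_rpow, Nat.cast_pow, ← Real.rpow_natCast, ← Real.rpow_natCast,
      ← Real.rpow_mul (by positivity), ← Real.rpow_add (by positivity)]
    norm_num
  have hsqrt : 2 ≤ √(D : ℝ) := Real.le_sqrt_of_sq_le (by linarith)
  rw [hrpow] at hD
  have : (D : ℝ) ^ 3 ≤ #(primeWindow D) := by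
    nlinarith [pow_le_pow_right₀ (by linarith : (1 : ℝ) ≤ D) (by norm_num : 2 ≤ 3),
      mul_le_mul_of_nonneg_left hsqrt (by positivity : (0 : ℝ) ≤ D ^ 3)]
  exact_mod_cast this

/-- The fractions in `(0, 1]` with a denominator between `2` and `B`, not necessarily reduced. -/
def fractionsLE (B : ℕ) : Set ℝ :=
  {x | ∃ a p : ℕ, 2 ≤ p ∧ p ≤ B ∧ 1 ≤ a ∧ a ≤ p ∧ x = a / p}

lemma pos_of_mem_fractionsLE {B : ℕ} {x : ℝ} (hx : x ∈ fractionsLE B) : 0 < x := by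
  obtain ⟨a, p, hp, -, ha, -, rfl⟩ := hx
  positivity

lemma le_one_of_mem_fractionsLE {B : ℕ} {x : ℝ} (hx : x ∈ fractionsLE B) : x ≤ 1 := by
  obtain ⟨a, p, -, -, -, hap, rfl⟩ := hx
  exact div_le_one_of_le₀ (mod_cast hap) p.cast_nonneg

/-- The mixture over the primes `p` between `D ^ 2` and `D ^ 4` of the uniform measures on the
fractions `a/p`. Its Fourier transform is small between `0` and a large power of `D`, since a
frequency `t` is close to a multiple of `p` for only few of these primes. -/
noncomputable def primeFractions (D : ℕ) : Measure ℝ :=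
  uniformMixture (primeWindow D) uniformFractions

section primeFractions

variable {D : ℕ}

lemma isProbabilityMeasure_uniformFractions_of_mem_primeWindow {p : ℕ} (hp : p ∈ primeWindow D) :
    IsProbabilityMeasure (uniformFractions p) :=
  isProbabilityMeasure_uniformFractions (mem_primeWindow.mp hp).2.pos

lemma isProbabilityMeasure_primeFractions (hD : (primeWindow D).Nonempty) :
    IsProbabilityMeasure (primeFractions D) :=
  isProbabilityMeasure_uniformMixture hD
    fun _ ↦ isProbabilityMeasure_uniformFractions_of_mem_primeWindow

lemma ae_primeFractions (D : ℕ) : ∀ᵐ x ∂primeFractions D, x ∈ fractionsLE (D ^ 4) := by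
  refine ae_uniformMixture fun p hp ↦ ae_uniformMixture fun a ha ↦ ?_
  obtain ⟨⟨-, hpD⟩, hprime⟩ := mem_primeWindow.mp hp
  rw [ae_dirac_eq]
  exact ⟨a + 1, p, hprime.two_le, hpD, a.succ_pos, Finset.mem_range.mp ha, by push_cast; rfl⟩

lemma norm_fourierT_primeFractions_le_one_div (hD : (primeWindow D).Nonempty) {t : ℝ}
    (ht : t ≠ 0) (htD : 2 * |t| ≤ (D : ℝ) ^ 2) :
    ‖fourierT (primeFractions D) t‖ ≤ 1 / |t| := by
  have hfar {p : ℕ} (hp : p ∈ primeWindow D) (m : ℤ) : |t| ≤ |t - m * p| := by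
    have hpD : (D : ℝ) ^ 2 ≤ p := mod_cast (mem_primeWindow.mp hp).1.1
    obtain rfl | hm := eq_or_ne m 0
    · simp
    have hm_abs : (1 : ℝ) ≤ |(m : ℝ)| := mod_cast Int.one_le_abs hm
    have htri : |(m * p : ℝ)| - |t| ≤ |t - m * p| := by
      rw [abs_sub_comm]
      exact abs_sub_abs_le_abs_sub _ _
    rw [abs_mul, Nat.abs_cast] at htri
    nlinarith
  have hcard : (0 : ℝ) < #(primeWindow D) := mod_cast hD.card_pos
  calc ‖fourierT (primeFractions D) t‖
      ≤ (∑ _p ∈ primeWindow D, 1 / |t|) / #(primeWindow D) :=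
        norm_fourierT_uniformMixture_le fun p hp ↦
          norm_fourierT_uniformFractions_le (mem_primeWindow.mp hp).2.pos
            (abs_pos.mpr ht) (hfar hp)
    _ = 1 / |t| := by
      rw [Finset.sum_const, nsmul_eq_mul, mul_div_cancel_left₀ _ hcard.ne']

lemma norm_fourierT_primeFractions_le_two_div {K : ℕ} (hD : 0 < D) (hKD : 2 * K ≤ D)
    (hcard : D ^ 3 ≤ #(primeWindow D)) {t : ℝ} (hDt : D ≤ |t|)
    (htD : |t| + D < ((D : ℝ) ^ 2) ^ (K + 1)) :
    ‖fourierT (primeFractions D) t‖ ≤ 2 / D := by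
  classical
  have hD' : (0 : ℝ) < D := mod_cast hD
  have hcard' : (D : ℝ) ^ 3 ≤ #(primeWindow D) := mod_cast hcard
  have hcard_pos : (0 : ℝ) < #(primeWindow D) := (by positivity : (0 : ℝ) < D ^ 3).trans_le hcard'
  let near := {p ∈ primeWindow D | ∃ m : ℤ, |t - m * (p : ℕ)| < D}
  have hnear_card : #near ≤ D ^ 2 := calc
    #near ≤ 2 * D * K := card_filter_near_multiple_le (R := D ^ 2)
      (fun p hp ↦ ⟨(mem_primeWindow.mp hp).2, (mem_primeWindow.mp hp).1.1⟩) hDt (mod_cast htD)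
    _ = D * (2 * K) := by ring
    _ ≤ D ^ 2 := by rw [sq]; gcongr
  have hterm (p) (hp : p ∈ primeWindow D) :
      ‖fourierT (uniformFractions p) t‖ ≤
        (if ∃ m : ℤ, |t - m * p| < D then 1 else 0) + 1 / (D : ℝ) := by
    have := isProbabilityMeasure_uniformFractions_of_mem_primeWindow hp
    split_ifs with hnear
    · exact (norm_fourierT_le_one _ t).trans (le_add_of_nonneg_right (by positivity))
    · push Not at hnear
      rw [zero_add]
      exact norm_fourierT_uniformFractions_le (mem_primeWindow.mp hp).2.pos hD' hnear
  calc ‖fourierT (primeFractions D) t‖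
      ≤ (∑ p ∈ primeWindow D, ((if ∃ m : ℤ, |t - m * p| < D then 1 else 0) + 1 / (D : ℝ)))
          / #(primeWindow D) :=
        norm_fourierT_uniformMixture_le hterm
    _ = #near / #(primeWindow D) + 1 / D := by
      rw [Finset.sum_add_distrib, Finset.sum_boole, Finset.sum_const, nsmul_eq_mul, add_div,
        mul_div_cancel_left₀ _ hcard_pos.ne']
    _ ≤ (D : ℝ) ^ 2 / D ^ 3 + 1 / D := by
      gcongr
      exact_mod_cast hnear_card
    _ = 2 / D := by field_simp; norm_num

end primeFractions


lemma div_le_rpow_neg_half {N x : ℝ} (hx : 0 < x) (hNx : N ^ 2 ≤ x) : N / x ≤ x ^ (-(1 / 2) : ℝ) :=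
  calc N / x ≤ √x / x := by gcongr; exact Real.le_sqrt_of_sq_le hNx
    _ = x ^ (-(1 / 2) : ℝ) := by
      rw [Real.sqrt_div_self', Real.rpow_neg hx.le, ← Real.sqrt_eq_rpow, one_div]

lemma two_div_le_rpow_neg_one_div {D x : ℝ} {K : ℕ} (hD : 4 ≤ D) (hK : 0 < K) (hx : 0 < x)
    (hxD : x ≤ D ^ (2 * K)) : 2 / D ≤ x ^ (-(1 / (4 * K)) : ℝ) := by
  have : (0 : ℝ) < K := mod_cast hK
  calc 2 / D ≤ D ^ (-(1 / 2) : ℝ) := div_le_rpow_neg_half (by linarith) (by linarith)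
    _ = (D ^ (2 * K)) ^ (-(1 / (4 * K)) : ℝ) := by
      rw [← Real.rpow_natCast, ← Real.rpow_mul (by linarith)]
      congr 1
      push_cast
      field_simp
      norm_num
    _ ≤ x ^ (-(1 / (4 * K)) : ℝ) :=
      Real.rpow_le_rpow_of_nonpos hx hxD (by rw [Left.neg_nonpos_iff]; positivity)

lemma rpow_neg_one_div_le_rpow_neg_one_div {x c s : ℝ} (hx : 1 ≤ x) (hc : 0 < c) (hcs : c ≤ s) :
    x ^ (-(1 / c)) ≤ x ^ (-(1 / s)) :=
  Real.rpow_le_rpow_of_exponent_le hx (neg_le_neg (one_div_le_one_div_of_le hc hcs))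

lemma norm_fourierT_primeFractions_div_le {D K : ℕ} {N : ℝ} (hK : 2 ≤ K) (hKD : 2 * K ≤ D)
    (hcard : D ^ 3 ≤ #(primeWindow D)) (hN : 1 ≤ N) {ξ s : ℝ} (hNξ : N ^ 2 ≤ |ξ|)
    (hξD : |ξ| ≤ (D : ℝ) ^ (2 * K)) (hs : 2 ≤ s) (hKs : D ≤ |ξ| → 4 * K ≤ s) :
    ‖fourierT (primeFractions D) (ξ / N)‖ ≤ |ξ| ^ (-(1 / s)) := by
  have hD : (4 : ℝ) ≤ D := by exact_mod_cast (by omega : 4 ≤ D)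
  have hξ : 1 ≤ |ξ| := (one_le_pow₀ hN).trans hNξ
  have hξ_div : |ξ / N| = |ξ| / N := by rw [abs_div, abs_of_pos (by linarith : 0 < N)]
  rcases le_or_gt (2 * |ξ / N|) ((D : ℝ) ^ 2) with hsmall | hlarge
  · have hne : ξ / N ≠ 0 := abs_pos.mp (by rw [hξ_div]; positivity)
    have hwindow : (primeWindow D).Nonempty :=
      Finset.card_pos.mp ((pow_pos (by omega) 3).trans_le hcard)
    calc ‖fourierT (primeFractions D) (ξ / N)‖ ≤ 1 / |ξ / N| :=
          norm_fourierT_primeFractions_le_one_div hwindow hne hsmall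
      _ = N / |ξ| := by rw [hξ_div, one_div_div]
      _ ≤ |ξ| ^ (-(1 / 2) : ℝ) := div_le_rpow_neg_half (by linarith) hNξ
      _ ≤ |ξ| ^ (-(1 / s)) := rpow_neg_one_div_le_rpow_neg_one_div hξ two_pos hs
  · have hDt : D ≤ |ξ / N| := by nlinarith
    have htξ : |ξ / N| ≤ |ξ| := hξ_div ▸ div_le_self (abs_nonneg ξ) hN
    have htD : |ξ / N| + D < ((D : ℝ) ^ 2) ^ (K + 1) := calc
      |ξ / N| + D ≤ (D : ℝ) ^ (2 * K) + D ^ (2 * K) := by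
        gcongr
        · exact htξ.trans hξD
        · exact le_self_pow₀ (by linarith) (by omega)
      _ < (D : ℝ) ^ (2 * K) * D ^ 2 := by
        have hpow : (0 : ℝ) < D ^ (2 * K) := by positivity
        have hsq : (2 : ℝ) < D ^ 2 := by nlinarith
        linarith [mul_lt_mul_of_pos_left hsq hpow]
      _ = ((D : ℝ) ^ 2) ^ (K + 1) := by ring
    calc ‖fourierT (primeFractions D) (ξ / N)‖ ≤ 2 / D :=
          norm_fourierT_primeFractions_le_two_div (by omega) hKD hcard hDt htD
      _ ≤ |ξ| ^ (-(1 / (4 * K)) : ℝ) :=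
        two_div_le_rpow_neg_one_div hD (by omega) (by linarith) hξD
      _ ≤ |ξ| ^ (-(1 / s)) :=
        rpow_neg_one_div_le_rpow_neg_one_div hξ (by positivity) (hKs (hDt.trans htξ))

/-! ### Liouville sums -/

section halving

variable {c u : ℕ → ℝ}

lemma le_half_pow_mul_of_two_mul_succ_le (hc : ∀ j, 2 * c (j + 1) ≤ c j) (j k : ℕ) :
    c (j + k) ≤ (1 / 2) ^ j * c k := by
  have h := le_geom (u := fun i ↦ c (i + k)) (by norm_num : (0 : ℝ) ≤ 1 / 2) j fun i _ ↦ by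
    rw [add_right_comm]
    linarith [hc (i + k)]
  rwa [zero_add] at h

lemma summable_of_le_of_two_mul_succ_le (hc : ∀ j, 2 * c (j + 1) ≤ c j) (hu : ∀ j, 0 ≤ u j)
    (huc : ∀ j, u j ≤ c j) : Summable u :=
  .of_nonneg_of_le hu (fun j ↦ (huc j).trans (le_half_pow_mul_of_two_mul_succ_le hc j 0))
    (summable_geometric_two.mul_right (c 0))

lemma tsum_add_le_of_two_mul_succ_le (hc : ∀ j, 2 * c (j + 1) ≤ c j) (hu : ∀ j, 0 ≤ u j)
    (huc : ∀ j, u j ≤ c j) (k : ℕ) : ∑' j, u (j + k) ≤ 2 * c k := by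
  have hsum := (summable_nat_add_iff k).mpr (summable_of_le_of_two_mul_succ_le hc hu huc)
  calc ∑' j, u (j + k) ≤ ∑' j, (1 / 2) ^ j * c k :=
        hsum.tsum_le_tsum (fun j ↦ (huc _).trans (le_half_pow_mul_of_two_mul_succ_le hc j k))
          (summable_geometric_two.mul_right (c k))
    _ = 2 * c k := by rw [tsum_mul_right, tsum_geometric_two]

end halving

lemma liouville_tsum_of_pos {u : ℕ → ℝ} (hsum : Summable u) (hu : ∀ j, 0 < u j)
    (h : ∀ n, ∃ k, ∃ a q : ℤ, 1 < q ∧ ∑ j ∈ Finset.range k, u j = a / q ∧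
      ∑' j, u (j + k) < 1 / (q : ℝ) ^ n) : Liouville (∑' j, u j) := by
  intro n
  obtain ⟨k, a, q, hq, hpartial, htail⟩ := h n
  have htail_pos : 0 < ∑' j, u (j + k) :=
    ((summable_nat_add_iff k).mpr hsum).tsum_pos (fun j ↦ (hu _).le) 0 (hu _)
  have hsplit : ∑' j, u j - a / q = ∑' j, u (j + k) := by
    rw [← hsum.sum_add_tsum_nat_add k, hpartial, add_sub_cancel_left]
  refine ⟨a, q, hq, sub_ne_zero.mp (hsplit ▸ htail_pos.ne'), ?_⟩
  rwa [hsplit, abs_of_pos htail_pos]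

/-! ### The measure attached to a rapidly growing sequence of scales -/

/-- The scales of the summands of a random series; the `k`-th summand lives at `scale (k + 1)`, and
`scale 0` only starts the recursion. The first growth condition makes the partial sums Liouville
approximations to the sum. The other two control the Fourier transform of the `k`-th summand up to
the power `2 * (5 * k + 6)` of its scale, past the start of the range of the next summand. -/
structure ScaleSequence where
  scale : ℕ → ℕ
  scale_zero_pos : 0 < scale 0
  four_mul_scale_pow_le (k : ℕ) : 4 * scale k ^ (5 * k + 5) ≤ scale (k + 1)
  le_scale_succ (k : ℕ) : 2 * (5 * k + 6) ≤ scale (k + 1)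
  scale_pow_three_le (k : ℕ) : scale (k + 1) ^ 3 ≤ #(primeWindow (scale (k + 1)))

namespace ScaleSequence

variable (S : ScaleSequence)

lemma scale_pos (k : ℕ) : 0 < S.scale k := by
  cases k with
  | zero => exact S.scale_zero_pos
  | succ k => exact (by omega : 0 < 2 * (5 * k + 6)).trans_le (S.le_scale_succ k)

/-- The number by which the `k`-th summand of the random series is divided. The exponent makes it
exceed the `k`-th power of the denominator of the `k`-th partial sum, which is at most
`scale k ^ 5`. -/
def dilation (k : ℕ) : ℕ := 4 * S.scale k ^ (5 * k)

lemma dilation_pos (k : ℕ) : 0 < S.dilation k :=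
  Nat.mul_pos four_pos (pow_pos (S.scale_pos k) _)

lemma dilation_mul_scale_pow_le (k : ℕ) : S.dilation k * S.scale k ^ 5 ≤ S.scale (k + 1) := by
  rw [dilation, mul_assoc, ← pow_add]
  exact S.four_mul_scale_pow_le k

lemma dilation_le_scale_succ (k : ℕ) : S.dilation k ≤ S.scale (k + 1) :=
  (Nat.le_mul_of_pos_right _ (pow_pos (S.scale_pos k) 5)).trans (S.dilation_mul_scale_pow_le k)

lemma two_mul_dilation_le (k : ℕ) : 2 * S.dilation k ≤ S.dilation (k + 1) :=
  Nat.mul_le_mul (by norm_num)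
    ((S.dilation_le_scale_succ k).trans (Nat.le_self_pow (by omega) _))

lemma dilation_succ_sq_le (k : ℕ) :
    S.dilation (k + 1) ^ 2 ≤ S.scale (k + 1) ^ (2 * (5 * k + 6)) := by
  have hfour : 4 ≤ S.scale (k + 1) := le_trans (by omega) (S.le_scale_succ k)
  calc S.dilation (k + 1) ^ 2 ≤ (S.scale (k + 1) * S.scale (k + 1) ^ (5 * (k + 1))) ^ 2 := by
        rw [dilation]
        gcongr
    _ = S.scale (k + 1) ^ (2 * (5 * k + 6)) := by ring

lemma exists_dilation_sq_le_and_le {x : ℝ} (hx : 16 ≤ x) :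
    ∃ k, (S.dilation k : ℝ) ^ 2 ≤ x ∧ x ≤ (S.dilation (k + 1) : ℝ) ^ 2 := by
  have hmono : StrictMono S.dilation := strictMono_nat_of_lt_succ fun k ↦ by
    have := S.dilation_pos k
    have := S.two_mul_dilation_le k
    omega
  have hexists : ∃ k, x < (S.dilation k : ℝ) ^ 2 := by
    obtain ⟨k, hk⟩ := exists_nat_gt x
    have hk' : (k : ℝ) ≤ S.dilation k := mod_cast hmono.le_apply
    exact ⟨k, by nlinarith⟩
  obtain ⟨k, hk, hk'⟩ := Nat.exists_not_and_succ_of_not_zero_of_exists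
    (by rw [dilation]; norm_num; exact hx) hexists
  exact ⟨k, not_lt.mp hk, hk'.le⟩

variable {S} {x : ℕ → ℝ}

lemma exists_sum_range_div_dilation_eq (hx : ∀ k, x k ∈ fractionsLE (S.scale (k + 1) ^ 4))
    (k : ℕ) : ∃ a q : ℕ, 2 ^ k ≤ q ∧ q ≤ S.scale k ^ 5 ∧
      ∑ j ∈ Finset.range k, x j / S.dilation j = a / q := by
  induction k with
  | zero => exact ⟨0, 1, le_rfl, Nat.one_le_pow _ _ (S.scale_pos 0), by simp⟩
  | succ k ih =>
    obtain ⟨b, q, hq, hq_le, hsum⟩ := ih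
    obtain ⟨a, p, hp, hp_le, -, -, hxk⟩ := hx k
    have hN := S.dilation_pos k
    have hq_pos : 0 < q := (pow_pos two_pos k).trans_le hq
    refine ⟨b * (p * S.dilation k) + q * a, q * (p * S.dilation k), ?_, ?_, ?_⟩
    · exact pow_succ 2 k ▸ Nat.mul_le_mul hq (hp.trans (Nat.le_mul_of_pos_right _ hN))
    · calc q * (p * S.dilation k) ≤ S.scale k ^ 5 * (S.scale (k + 1) ^ 4 * S.dilation k) := by
            gcongr
        _ = S.dilation k * S.scale k ^ 5 * S.scale (k + 1) ^ 4 := by ring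
        _ ≤ S.scale (k + 1) * S.scale (k + 1) ^ 4 := by
          gcongr
          exact S.dilation_mul_scale_pow_le k
        _ = S.scale (k + 1) ^ 5 := by ring
    · rw [Finset.sum_range_succ, hsum, hxk, div_div,
        div_add_div _ _ (by positivity) (by positivity)]
      push_cast
      rfl

lemma two_mul_one_div_dilation_le (k : ℕ) :
    2 * (1 / S.dilation (k + 1) : ℝ) ≤ 1 / S.dilation k := by
  have hN : (0 : ℝ) < S.dilation k := mod_cast S.dilation_pos k
  have hN' : (0 : ℝ) < S.dilation (k + 1) := mod_cast S.dilation_pos (k + 1)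
  have h : (2 * S.dilation k : ℝ) ≤ S.dilation (k + 1) := mod_cast S.two_mul_dilation_le k
  rw [mul_one_div, div_le_div_iff₀ hN' hN]
  linarith

lemma div_dilation_pos (hx : ∀ k, x k ∈ fractionsLE (S.scale (k + 1) ^ 4)) (k : ℕ) :
    0 < x k / S.dilation k :=
  div_pos (pos_of_mem_fractionsLE (hx k)) (mod_cast S.dilation_pos k)

lemma div_dilation_le (hx : ∀ k, x k ∈ fractionsLE (S.scale (k + 1) ^ 4)) (k : ℕ) :
    x k / S.dilation k ≤ 1 / S.dilation k := by
  gcongr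
  exact le_one_of_mem_fractionsLE (hx k)

lemma summable_div_dilation (hx : ∀ k, x k ∈ fractionsLE (S.scale (k + 1) ^ 4)) :
    Summable fun k ↦ x k / (S.dilation k : ℝ) :=
  summable_of_le_of_two_mul_succ_le two_mul_one_div_dilation_le
    (fun k ↦ (div_dilation_pos hx k).le) (div_dilation_le hx)

lemma two_mul_pow_lt_dilation_succ {q n : ℕ} (hq : q ≤ S.scale (n + 1) ^ 5) :
    2 * q ^ n < S.dilation (n + 1) := by
  have hpow : q ^ n ≤ S.scale (n + 1) ^ (5 * (n + 1)) := calc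
    q ^ n ≤ (S.scale (n + 1) ^ 5) ^ n := Nat.pow_le_pow_left hq n
    _ = S.scale (n + 1) ^ (5 * n) := (pow_mul _ _ _).symm
    _ ≤ S.scale (n + 1) ^ (5 * (n + 1)) := Nat.pow_le_pow_right (S.scale_pos _) (by omega)
  have hpos : 0 < S.scale (n + 1) ^ (5 * (n + 1)) := pow_pos (S.scale_pos _) _
  rw [dilation]
  omega

lemma liouville_tsum_div_dilation (hx : ∀ k, x k ∈ fractionsLE (S.scale (k + 1) ^ 4)) :
    Liouville (∑' k, x k / S.dilation k) := by
  refine liouville_tsum_of_pos (summable_div_dilation hx) (div_dilation_pos hx) fun n ↦ ?_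
  obtain ⟨a, q, hq, hq_le, hpartial⟩ := exists_sum_range_div_dilation_eq hx (n + 1)
  have hq_one : 1 < q := (Nat.one_lt_two_pow n.succ_ne_zero).trans_le hq
  refine ⟨n + 1, a, q, mod_cast hq_one, by simpa using hpartial, ?_⟩
  have hN_pos : (0 : ℝ) < S.dilation (n + 1) := mod_cast S.dilation_pos _
  have hqN : (2 * q ^ n : ℝ) < S.dilation (n + 1) := mod_cast two_mul_pow_lt_dilation_succ hq_le
  calc ∑' j, x (j + (n + 1)) / (S.dilation (j + (n + 1)) : ℝ)
      ≤ 2 * (1 / S.dilation (n + 1)) :=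
        tsum_add_le_of_two_mul_succ_le two_mul_one_div_dilation_le
          (fun k ↦ (div_dilation_pos hx k).le) (div_dilation_le hx) (n + 1)
    _ < 1 / ((q : ℤ) : ℝ) ^ n := by
      rw [Int.cast_natCast, mul_one_div, div_lt_div_iff₀ hN_pos (by positivity)]
      linarith

variable (S)

/-- The law of `∑ k, X k / dilation k`, where the `X k` are independent and `X k` is distributed
according to `primeFractions (scale (k + 1))`. -/
noncomputable def law : Measure ℝ :=
  scaledSumLaw (fun k ↦ S.dilation k) fun k ↦ primeFractions (S.scale (k + 1))

instance isProbabilityMeasure_primeFractions_scale (k : ℕ) :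
    IsProbabilityMeasure (primeFractions (S.scale (k + 1))) :=
  isProbabilityMeasure_primeFractions
    (Finset.card_pos.mp ((pow_pos (S.scale_pos _) 3).trans_le (S.scale_pow_three_le k)))

instance isProbabilityMeasure_law : IsProbabilityMeasure S.law :=
  isProbabilityMeasure_scaledSumLaw

lemma ae_mem_fractionsLE :
    ∀ᵐ x ∂Measure.infinitePi fun k ↦ primeFractions (S.scale (k + 1)),
      ∀ k, x k ∈ fractionsLE (S.scale (k + 1) ^ 4) :=
  ae_all_iff.mpr fun k ↦ (measurePreserving_eval_infinitePi _ k).quasiMeasurePreserving.ae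
    (ae_primeFractions _)

lemma ae_liouville_law : ∀ᵐ x ∂S.law, Liouville x := by
  rw [law, scaledSumLaw, ae_map_iff (measurable_tsum_div _).aemeasurable
    IsGδ.setOfPred_liouville.measurableSet]
  filter_upwards [S.ae_mem_fractionsLE] with x hx using liouville_tsum_div_dilation hx

lemma norm_fourierT_law_le (k : ℕ) (ξ : ℝ) :
    ‖fourierT S.law ξ‖ ≤ ‖fourierT (primeFractions (S.scale (k + 1))) (ξ / S.dilation k)‖ :=
  norm_fourierT_scaledSumLaw_le (S.ae_mem_fractionsLE.mono fun _ ↦ summable_div_dilation) k ξ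

lemma norm_fourierT_law_le_rpow {φ : ℝ → ℝ}
    (hφ : ∀ k (x : ℝ), S.scale (k + 1) ≤ x → 4 * (5 * k + 6 : ℕ) ≤ φ x) {ξ : ℝ} (hξ : 16 ≤ |ξ|)
    (hφξ : 2 ≤ φ |ξ|) : ‖fourierT S.law ξ‖ ≤ |ξ| ^ (-(1 / φ |ξ|)) := by
  obtain ⟨k, hk, hk'⟩ := S.exists_dilation_sq_le_and_le hξ
  exact (S.norm_fourierT_law_le k ξ).trans <|
    norm_fourierT_primeFractions_div_le (by omega) (S.le_scale_succ k) (S.scale_pow_three_le k)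
      (mod_cast S.dilation_pos k) hk (hk'.trans (mod_cast S.dilation_succ_sq_le k)) hφξ (hφ k _)

end ScaleSequence

lemma exists_scaleSequence {φ : ℝ → ℝ} (hφ : Tendsto φ atTop atTop) :
    ∃ S : ScaleSequence, ∀ k (x : ℝ), S.scale (k + 1) ≤ x → 4 * (5 * k + 6 : ℕ) ≤ φ x := by
  have hnext (k e : ℕ) : ∃ d : ℕ, 4 * e ^ (5 * k + 5) ≤ d ∧ 2 * (5 * k + 6) ≤ d ∧
      d ^ 3 ≤ #(primeWindow d) ∧ ∀ x : ℝ, d ≤ x → 4 * (5 * k + 6 : ℕ) ≤ φ x :=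
    ((eventually_ge_atTop _).and <| (eventually_ge_atTop _).and <|
      eventually_pow_three_le_card_primeWindow.and <| tendsto_natCast_atTop_atTop.eventually <|
        eventually_forall_ge_atTop.mpr <| hφ.eventually_ge_atTop _).exists
  choose next hpow hlinear hcard hlarge using hnext
  exact ⟨⟨Nat.rec 1 next, one_pos, fun k ↦ hpow k _, fun k ↦ hlinear k _, fun k ↦ hcard k _⟩,
    fun k ↦ hlarge k _⟩

theorem stmt19_general {φ : ℝ → ℝ} (hφ : Tendsto φ atTop atTop) :
    ∃ μ : Measure ℝ, IsProbabilityMeasure μ ∧ μ {x : ℝ | Liouville x}ᶜ = 0 ∧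
      ∃ M : ℝ, ∀ ξ : ℝ, M ≤ |ξ| → ‖fourierT μ ξ‖ ≤ |ξ| ^ (-(1 / φ |ξ|)) := by
  obtain ⟨S, hS⟩ := exists_scaleSequence hφ
  obtain ⟨M, hM⟩ := eventually_atTop.mp (hφ.eventually_ge_atTop 2)
  exact ⟨S.law, inferInstance, S.ae_liouville_law, max 16 M, fun ξ hξ ↦
    S.norm_fourierT_law_le_rpow hS (le_of_max_le_left hξ) (hM _ (le_of_max_le_right hξ))⟩

theorem stmt19 :
    ∃ μ : Measure ℝ, IsProbabilityMeasure μ ∧ μ {x : ℝ | Liouville x}ᶜ = 0 ∧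
      ∃ C > (0 : ℝ), ∃ M > Real.exp (Real.exp 1),
        ∀ ξ : ℝ, M ≤ |ξ| →
          ‖fourierT μ ξ‖ ≤ C * |ξ| ^ (-(1 / Real.log (Real.log |ξ|))) := by
  obtain ⟨μ, hμ, hLiouville, M, hM⟩ :=
    stmt19_general (Real.tendsto_log_atTop.comp Real.tendsto_log_atTop)
  exact ⟨μ, hμ, hLiouville, 1, one_pos, max M (Real.exp (Real.exp 1) + 1),
    lt_max_of_lt_right (lt_add_one _), fun ξ hξ ↦ by
      simpa only [one_mul, Function.comp_apply] using hM ξ (le_of_max_le_left hξ)⟩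
end
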